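/- Let q = p^f be a power of a prime p, d ≥ 0, k > 0, and suppose U_d(k) is nonempty. Let M = (M_0,…,M_d) be the lexicographically greatest element of U_d(k) (the 'greedy element'). Then for every other tuple (m_0,…,m_d) ∈ U_d(k) one has d·m_0 + (d-1)·m_1 + … + m_{d-1} < d·M_0 + (d-1)·M_1 + … + M_{d-1}, and consequently the degree in t of S_d(-k) = Σ_{a monic of degree d in F_q[t]} a^k equals d·M_0 + (d-1)·M_1 + … + M_{d-1}. -/

import Mathlib

/-!
Write `Q = q - 1` and cut every number into its units: a digit `c` at position `h` in base `p`
is `c` units `p^h`. A sum without carrying then is a partition of the units of `k`, so an element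
of `U_d(k)` is a labelling of these units by `0, …, d` (`IsPack`) whose parts `1, …, d` are
nonempty and represent multiples of `Q`. As `wt m = d k - ∑ i m_i`, maximal weight means minimal
cost `∑ g(y) p^(pos y)` of the labelling `g` (`IsOpt`).

Divisibility by `Q` is read off from the cyclic weights `W_i(A) = ∑_{y ∈ A} p^((pos y - i) mod f)`,
which satisfy `p^i W_i(A) ≡ ∑_{y ∈ A} p^(pos y)` modulo `Q`. A nonempty set of units representing a
multiple of `Q` has all `W_i ≥ Q`; conversely a set with all `W_i ≥ Q` contains a nonempty subset
representing a multiple of `Q` (`exists_valid_subset`).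

The core is `rigid`: in a labelling of minimal cost no unit `x` with positive label can be spared,
that is, the other units with positive labels together with all units at positions below `x` have
some `W_i < d Q`. The proof is by induction on `d`. Given a counterexample, take `x` at the highest
possible position. The induction hypothesis forces `x` to lie in part `1` and restricts the types
of the units above `x`; then `exchange` discards `x` and repairs the parts by raising labels of
units below `x` only, each by at most one. Since the units below `x` represent less than
`p^(pos x)`, this lowers the cost (`cost_lt`), a contradiction.

Let now `m` have maximal weight and suppose `m ≠ M`, where `M` is the greedy element. At the first
index `s` where they differ, `m_s < M_s`, so `∑_{i>s} m_i > ∑_{i>s} M_i`. At the top position where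
these two numbers differ, a unit `x` of the first one can be spared: without `x`, the units of
`∑_{i>s} m_i` together with all units of `∑_{i≥s} m_i` below `x` outweigh those of
`∑_{i>s} M_i`, whose weights are at least `(d - s) Q`. The labels `≥ s` of `m`, lowered by `s`, form
again a labelling of minimal cost (`IsOpt.drop`), so this contradicts `rigid`. Hence `M` is the
only element of maximal weight.

For the degree, expand `a^k` by the multinomial theorem and sum over the coefficients of `a`. Since
`∑_{x ∈ F} x^n` is `-1` if `n > 0` and `Q ∣ n`, and `0` otherwise, and since a multinomial
coefficient is prime to `p` exactly when there is no carrying, `S_d(-k)` is a sum of terms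
`c_m t^(wt m)` over `m ∈ U_d(k)` with `c_m ≠ 0`, and the term of `M` cannot be cancelled.
-/

open Polynomial

open scoped Classical

/-- The monic polynomial `X^d + c_{d-1} X^{d-1} + ... + c_0` determined by its lower
coefficients `c : Fin d → F`; these parametrize the monic polynomials of degree `d`. -/
noncomputable def monicPoly (F : Type) [Field F] (d : ℕ) (c : Fin d → F) : F[X] :=
  X ^ d + ∑ i : Fin d, C (c i) * X ^ (i : ℕ)

/-- `S_d(-k) = Σ_{a monic of degree d} a^k`. -/
noncomputable def powerSum (F : Type) [Field F] [Fintype F] (d k : ℕ) : F[X] :=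
  ∑ c : Fin d → F, monicPoly F d c ^ k

/-- `S̃_d(-k) = Σ_{a monic of degree d, v ∤ a} a^k`. -/
noncomputable def rPowerSum (F : Type) [Field F] [Fintype F] (v : F[X]) (d k : ℕ) : F[X] :=
  ∑ c : Fin d → F, if v ∣ monicPoly F d c then 0 else monicPoly F d c ^ k

/-- `∑ i, m i = k` with no carrying of base-`p` digits. -/
def NoCarry (p : ℕ) {n : ℕ} (m : Fin n → ℕ) (k : ℕ) : Prop :=
  (∑ i, m i = k) ∧
    ∀ j : ℕ, (∑ i, (Nat.digits p (m i)).getD j 0) = (Nat.digits p k).getD j 0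

/-- `U_d(k)`. -/
def Uset (p q d k : ℕ) : Set (Fin (d + 1) → ℕ) :=
  {m | NoCarry p m k ∧ ∀ i : Fin (d + 1), 0 < (i : ℕ) → 0 < m i ∧ (q - 1) ∣ m i}

/-- `V_d(k)`. -/
def Vset (p q d k : ℕ) : Set (Fin (d + 1) → ℕ) :=
  {m | m ∈ Uset p q d k ∧ 0 < m 0}

/-- `W_d(k)`, the index set for the restricted power sum at `v = t`. -/
def Wset (p q d k : ℕ) : Set (Fin (d + 1) → ℕ) :=
  {m | NoCarry p m k ∧
      (∀ i : Fin (d + 1), 0 < (i : ℕ) → (i : ℕ) < d → 0 < m i ∧ (q - 1) ∣ m i) ∧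
      (q - 1) ∣ m (Fin.last d)}

/-- the weight `d·m_0 + (d-1)·m_1 + ⋯ + 1·m_{d-1}`. -/
def wt {d : ℕ} (m : Fin (d + 1) → ℕ) : ℕ := ∑ i : Fin (d + 1), (d - (i : ℕ)) * m i

/-- `L_k = min_{0 ≤ i ≤ f-1} l(k·p^i)/(q-1)` where `l` is the base-`q` digit sum. -/
noncomputable def Lval (q p f k : ℕ) : ℚ :=
  (Finset.Icc 0 (f - 1)).inf' ⟨0, by simp⟩
    (fun i => ((Nat.digits q (k * p ^ i)).sum : ℚ) / ((q : ℚ) - 1))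

/-- the `v`-adic multiple zeta value at negative integers `s_1, …, s_r`. -/
noncomputable def zetaV (F : Type) [Field F] [Fintype F] (v : F[X]) {r : ℕ}
    (s : Fin r → ℤ) : F[X] :=
  ∑ᶠ d ∈ {d : Fin r → ℕ | StrictAnti d}, ∏ i, rPowerSum F v (d i) (-(s i)).toNat

/-- the multiple zeta value at negative integers `s_1, …, s_r`. -/
noncomputable def zetaMZV (F : Type) [Field F] [Fintype F] {r : ℕ} (s : Fin r → ℤ) : F[X] :=
  ∑ᶠ d ∈ {d : Fin r → ℕ | StrictAnti d}, ∏ i, powerSum F (d i) (-(s i)).toNat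

/-- the trivial-zero condition for a prime of degree `e`. -/
def TrivialZeroCond (q p f : ℕ) {r : ℕ} (s : Fin r → ℤ) (e : ℕ) : Prop :=
  (∃ i : Fin r, s i < 0 ∧
      Lval q p f (-(s i)).toNat + (e : ℚ) < ((r - 1 - (i : ℕ) : ℕ) : ℚ)) ∨
  (∃ i j : Fin r, j < i ∧ s i < 0 ∧ s j < 0 ∧
      (r - 1 - (i : ℕ) : ℕ) < e ∧
      Lval q p f (-(s i)).toNat < ((r - 1 - (i : ℕ) : ℕ) : ℚ) ∧
      Lval q p f (-(s j)).toNat < (((i : ℕ) - (j : ℕ) : ℕ) : ℚ))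

set_option linter.unusedSectionVars false

/-! ### Cyclic weights -/

/-- The cyclic distance from the type `i` up to the type `j`, in `{0, …, f-1}`. -/
def gap {f : ℕ} (i j : ZMod f) : ℕ := (j - i).val

/-- The weight `W p ty i A = ∑_{y ∈ A} p^((ty y - i) mod f)`. If `y` stands for a unit `p^h` with
`h` of residue `ty y` modulo `f`, this is congruent to `p^(-i) ∑ p^h` modulo `p^f - 1`. -/
def W {ι : Type} {f : ℕ} (p : ℕ) (ty : ι → ZMod f) (i : ZMod f) (A : Finset ι) : ℕ :=
  ∑ y ∈ A, p ^ gap i (ty y)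

/-- The number of elements of type `i`. -/
def cnt {ι : Type} {f : ℕ} (ty : ι → ZMod f) (i : ZMod f) (A : Finset ι) : ℕ :=
  (A.filter (fun y => ty y = i)).card

/-- All weights of `A` are divisible by `q - 1`; for units at positions this means that the number
represented by `A` is divisible by `q - 1` (see `dvd_W_iff`). -/
def Valid {ι : Type} {f : ℕ} (p : ℕ) (ty : ι → ZMod f) (A : Finset ι) : Prop :=
  ∀ i, (p ^ f - 1) ∣ W p ty i A

section Weights

variable {ι : Type} {f : ℕ} [NeZero f] {p : ℕ} {ty : ι → ZMod f}

lemma gap_lt (i j : ZMod f) : gap i j < f := ZMod.val_lt _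

lemma gap_self (i : ZMod f) : gap i i = 0 := by simp [gap]

/-- Distances add up, up to one turn around the cycle. -/
lemma gap_rel (i e z : ZMod f) :
    gap i e + gap e z = gap i z ∨ gap i e + gap e z = gap i z + f := by
  have h : (z - i) = (e - i) + (z - e) := by ring
  have h1 : gap i z = (gap i e + gap e z) % f := by
    unfold gap; rw [h, ZMod.val_add]
  have h2 := gap_lt i e
  have h3 := gap_lt e z
  rcases lt_or_ge (gap i e + gap e z) f with h4 | h4
  · left; rw [h1, Nat.mod_eq_of_lt h4]
  · right
    rw [h1, Nat.mod_eq_sub_mod h4, Nat.mod_eq_of_lt (by omega)]; omega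

lemma gap_eq_zero {i j : ZMod f} (h : gap i j = 0) : j = i := by
  unfold gap at h
  rw [ZMod.val_eq_zero] at h
  exact sub_eq_zero.mp h

lemma gap_succ_self (i : ZMod f) : gap (i + 1) i + 1 = f := by
  unfold gap
  have : i - (i + 1) = (-1 : ZMod f) := by ring
  rw [this]
  obtain ⟨n, rfl⟩ : ∃ n, f = n + 1 := ⟨f - 1, by have := NeZero.pos f; omega⟩
  rw [ZMod.val_neg_one]

lemma gap_succ {i j : ZMod f} (h : j ≠ i) : gap (i + 1) j + 1 = gap i j := by
  have h1 := gap_succ_self i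
  have h2 := gap_rel (i + 1) i j
  have h3 : gap i j ≠ 0 := fun h' => h (gap_eq_zero h')
  have h4 := gap_lt i j
  have h5 := gap_lt (i + 1) j
  omega

lemma W_union {i : ZMod f} {A B : Finset ι} (h : Disjoint A B) :
    W p ty i (A ∪ B) = W p ty i A + W p ty i B := Finset.sum_union h

lemma W_mono {i : ZMod f} {A B : Finset ι} (h : A ⊆ B) : W p ty i A ≤ W p ty i B :=
  Finset.sum_le_sum_of_subset h

lemma W_erase {i : ZMod f} {A : Finset ι} {x : ι} (hx : x ∈ A) :
    W p ty i (A.erase x) + p ^ gap i (ty x) = W p ty i A :=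
  Finset.sum_erase_add _ _ hx

lemma W_mem {i : ZMod f} {A : Finset ι} {x : ι} (hx : x ∈ A) :
    p ^ gap i (ty x) ≤ W p ty i A :=
  Finset.single_le_sum (f := fun y => p ^ gap i (ty y)) (fun _ _ => Nat.zero_le _) hx

lemma W_step (hp : 2 ≤ p) (i : ZMod f) (A : Finset ι) :
    W p ty i A + (p ^ f - 1) * cnt ty i A = p * W p ty (i + 1) A := by
  unfold W cnt
  rw [Finset.card_filter, Finset.mul_sum, Finset.mul_sum, ← Finset.sum_add_distrib]
  refine Finset.sum_congr rfl fun y _ => ?_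
  have hpos : 1 ≤ p ^ f := Nat.one_le_pow _ _ (by omega)
  by_cases h : ty y = i
  · have h1 := gap_succ_self i
    simp only [h, gap_self, if_true, pow_zero, mul_one]
    rw [← pow_succ', h1]; omega
  · have h1 := gap_succ h
    simp only [h, if_false, mul_zero, add_zero]
    rw [← pow_succ', h1]

lemma W_eq_sum_cnt (i : ZMod f) (A : Finset ι) :
    W p ty i A = ∑ e : ZMod f, cnt ty e A * p ^ gap i e := by
  unfold W cnt
  rw [← Finset.sum_fiberwise A ty]
  refine Finset.sum_congr rfl fun e _ => ?_
  rw [Finset.sum_congr rfl (g := fun _ => p ^ gap i e), Finset.sum_const, smul_eq_mul]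
  intro y hy
  rw [(Finset.mem_filter.mp hy).2]

lemma gap_pred (i e : ZMod f) : gap i (e - 1) + 1 = if e = i then f else gap i e := by
  split_ifs with h
  · subst h
    have := gap_succ_self (e - 1)
    simpa using this
  · have h1 := gap_rel i (e - 1) e
    have h2 := gap_rel e (e - 1) e
    have h3 := gap_succ_self (e - 1)
    have h0 := gap_self e
    simp only [sub_add_cancel] at h3
    have h4 : gap i e ≠ 0 := fun h' => h (gap_eq_zero h')
    have h5 := gap_lt i e
    have h6 := gap_lt i (e - 1)
    have h7 := gap_lt (e - 1) e
    have h8 : gap e (e - 1) < f := gap_lt _ _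
    have h9 := gap_rel i e (e - 1)
    omega

/-- The vector `e ↦ p b_{e+1} - b_e` of type counts has weights `(q - 1) b_i`. -/
lemma sum_gamma (p : ℕ) (b : ZMod f → ℤ) (i : ZMod f) :
    ∑ e : ZMod f, ((p : ℤ) * b (e + 1) - b e) * (p : ℤ) ^ gap i e = ((p : ℤ) ^ f - 1) * b i := by
  have h1 : ∑ e : ZMod f, (p : ℤ) * b (e + 1) * (p : ℤ) ^ gap i e
      = ∑ e : ZMod f, b e * (p : ℤ) ^ (gap i (e - 1) + 1) := by
    refine Fintype.sum_equiv (Equiv.addRight 1) _ _ fun e => ?_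
    simp only [Equiv.coe_addRight, add_sub_cancel_right]
    ring
  simp only [sub_mul]
  rw [Finset.sum_sub_distrib, h1, ← Finset.sum_sub_distrib]
  rw [Finset.sum_eq_single i]
  · rw [gap_pred, if_pos rfl, gap_self]; ring
  · intro e _ he
    rw [gap_pred, if_neg he]; ring
  · simp

lemma pow_gap_le (hp : 2 ≤ p) (i j : ZMod f) : p ^ gap i j ≤ p ^ f - 1 := by
  have h := gap_lt i j
  have : p ^ gap i j < p ^ f := Nat.pow_lt_pow_right (by omega) h
  omega

lemma Q_pos (hp : 2 ≤ p) : 1 ≤ p ^ f - 1 := by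
  have : p ^ 0 < p ^ f := Nat.pow_lt_pow_right (by omega) (NeZero.pos f)
  simp at this; omega

lemma Valid.le {A : Finset ι} (hp : 2 ≤ p) (h : Valid p ty A) (hA : A.Nonempty) (i : ZMod f) :
    p ^ f - 1 ≤ W p ty i A := by
  obtain ⟨y, hy⟩ := hA
  refine Nat.le_of_dvd ?_ (h i)
  exact lt_of_lt_of_le (Nat.pow_pos (by omega)) (W_mem hy)

end Weights

/-! ### Valid subsets -/

section Weights2
variable {ι : Type} {f : ℕ} [NeZero f] {p : ℕ} {ty : ι → ZMod f}

/-- A set which is neither valid nor of too small weight contains an element whose removal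
keeps all the weights at least `q - 1`. -/
lemma exists_erase (hp : 2 ≤ p) {B : Finset ι} (hB : ∀ i, p ^ f - 1 ≤ W p ty i B)
    (hv : ¬ Valid p ty B) : ∃ y ∈ B, ∀ i, p ^ f - 1 ≤ W p ty i (B.erase y) := by
  have hQ : 1 ≤ p ^ f - 1 := Q_pos hp
  have hcast : ((p ^ f - 1 : ℕ) : ℤ) = (p : ℤ) ^ f - 1 := by
    rw [Nat.cast_sub (Nat.one_le_pow _ _ (by omega))]; simp
  set Q := p ^ f - 1 with hQdef
  set r : ZMod f → ℤ := fun i => ((W p ty i B % Q : ℕ) : ℤ) with hr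
  have hr0 : ∀ i, 0 ≤ r i := fun i => by simp only [hr]; positivity
  have hrQ : ∀ i, r i < Q := fun i => by
    simp only [hr]; exact_mod_cast Nat.mod_lt _ (by omega)
  have hdvd : ∀ i, (Q : ℤ) ∣ p * r (i + 1) - r i := by
    intro i
    have h := W_step (ty := ty) hp i B
    have h1 : ∀ j, r j = (W p ty j B : ℤ) - Q * (W p ty j B / Q : ℕ) := by
      intro j
      have := Nat.div_add_mod (W p ty j B) Q
      simp only [hr]; push_cast; zify at this; linarith
    refine ⟨cnt ty i B - p * (W p ty (i+1) B / Q : ℕ) + (W p ty i B / Q : ℕ), ?_⟩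
    rw [h1, h1]; zify at h; rw [← hQdef] at h; push_cast at h ⊢; linarith
  choose ρ hρ using hdvd
  have hρ0 : ∀ i, 0 ≤ ρ i := by
    intro i
    by_contra hneg
    have h1 : ρ i ≤ -1 := by omega
    have h2 := hρ i
    have h3 : 0 ≤ (p : ℤ) * r (i + 1) := mul_nonneg (by positivity) (hr0 _)
    have h4 := hrQ i
    nlinarith
  have hrsum : ∀ i, r i = ∑ e, ρ e * (p : ℤ) ^ gap i e := by
    intro i
    have h := sum_gamma p r i
    simp only [hρ, ← hcast] at h
    have h2 : (Q : ℤ) * ∑ e, ρ e * (p : ℤ) ^ gap i e = Q * r i := by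
      rw [← h, Finset.mul_sum]; exact Finset.sum_congr rfl fun e _ => by ring
    exact (mul_left_cancel₀ (by positivity) h2).symm
  have hρr : ∀ i e, 1 ≤ ρ e → (p : ℤ) ^ gap i e ≤ r i := by
    intro i e he
    rw [hrsum i]
    calc (p : ℤ) ^ gap i e ≤ ρ e * (p : ℤ) ^ gap i e :=
          le_mul_of_one_le_left (by positivity) he
      _ ≤ _ := Finset.single_le_sum (f := fun e => ρ e * (p : ℤ) ^ gap i e)
          (fun e _ => mul_nonneg (hρ0 e) (by positivity)) (Finset.mem_univ e)
  have hexρ : ∃ e, 1 ≤ ρ e := by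
    by_contra hno
    push Not at hno
    apply hv
    intro i
    have hz : ∀ e, ρ e = 0 := fun e => by have := hno e; have := hρ0 e; omega
    have : r i = 0 := by rw [hrsum i]; simp [hz]
    simp only [hr] at this
    exact Nat.dvd_of_mod_eq_zero (by exact_mod_cast this)
  obtain ⟨e0, he0⟩ := hexρ
  have hne : B.Nonempty := by
    by_contra h
    rw [Finset.not_nonempty_iff_eq_empty] at h
    have := hB 0
    simp [h, W] at this; omega
  obtain ⟨y0, hy0⟩ := hne
  -- among present types `j` and types `j'` with `ρ j' ≥ 1`, a pair at minimal distance
  obtain ⟨⟨y, e⟩, hye, hmin⟩ := Finset.exists_min_image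
    (B ×ˢ (Finset.univ.filter (fun e => 1 ≤ ρ e))) (fun z => gap (ty z.1) z.2)
    ⟨(y0, e0), by simp [hy0, he0]⟩
  simp only [Finset.mem_product, Finset.mem_filter, Finset.mem_univ, true_and] at hye
  obtain ⟨hy, he⟩ := hye
  refine ⟨y, hy, fun i => ?_⟩
  have hE := W_erase (p := p) (ty := ty) (i := i) hy
  rcases le_or_gt (gap i (ty y)) (gap i e) with hle | hlt
  · have h1 := hρr i e he
    have h2 : p ^ gap i (ty y) ≤ W p ty i B % Q := by
      have h3 : p ^ gap i (ty y) ≤ p ^ gap i e := Nat.pow_le_pow_right (by omega) hle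
      have h4 : p ^ gap i e ≤ W p ty i B % Q := by
        simp only [hr] at h1; exact_mod_cast h1
      omega
    have h5 := Nat.div_add_mod (W p ty i B) Q
    have h6 : 1 ≤ W p ty i B / Q := (Nat.one_le_div_iff (by omega)).mpr (hB i)
    have h7 : Q * 1 ≤ Q * (W p ty i B / Q) := Nat.mul_le_mul_left _ h6
    omega
  · have hg := gap_rel i (ty y) e
    have hl := gap_lt i (ty y)
    have hc : cnt ty i B = 0 := by
      unfold cnt
      rw [Finset.card_eq_zero, Finset.filter_eq_empty_iff]
      intro z hz hzi
      have := hmin (z, e) (by simp [hz, he])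
      simp only [hzi] at this
      omega
    have hs := W_step (ty := ty) hp i B
    rw [hc] at hs
    have h1 := hB (i + 1)
    have h2 : p ^ gap i (ty y) ≤ Q := pow_gap_le hp i (ty y)
    have h3 : 2 * W p ty (i+1) B ≤ p * W p ty (i+1) B := Nat.mul_le_mul_right _ hp
    omega

/-- A set of weights at least `q - 1` contains a nonempty valid subset. -/
lemma exists_valid_subset (hp : 2 ≤ p) (B : Finset ι) (hB : ∀ i, p ^ f - 1 ≤ W p ty i B) :
    ∃ A ⊆ B, A.Nonempty ∧ Valid p ty A := by
  induction B using Finset.strongInduction with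
  | H B ih =>
    by_cases hv : Valid p ty B
    · refine ⟨B, subset_rfl, ?_, hv⟩
      by_contra h
      rw [Finset.not_nonempty_iff_eq_empty] at h
      have := hB 0
      have hQ := Q_pos (f := f) hp
      simp [h, W] at this; omega
    · obtain ⟨y, hy, h⟩ := exists_erase hp hB hv
      obtain ⟨A, hA, h1, h2⟩ := ih _ (Finset.erase_ssubset hy) h
      exact ⟨A, hA.trans (Finset.erase_subset _ _), h1, h2⟩

/-- A multiplicity vector `b` that is at least `1` on `L` can be split off from `a`, leaving a
vector with entries at least `1` and with nonnegative type counts. Choosing `b` of smallest sum, its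
own type counts `p b_{i+1} - b_i` are nonnegative except where `i ∈ L`, `b_i = 1` and
`b_{i+1} = 0`. -/
lemma exists_split (hp : 2 ≤ p) (a : ZMod f → ℕ) (L : Finset (ZMod f)) (ha : ∀ i, 1 ≤ a i)
    (hL : ∀ i ∈ L, 2 ≤ a i) (hγ : ∀ i, a i ≤ p * a (i + 1)) :
    ∃ b : ZMod f → ℕ, (∀ i ∈ L, 1 ≤ b i) ∧ (∀ i, b i + 1 ≤ a i) ∧
      (∀ i, p * b (i + 1) + a i ≤ p * a (i + 1) + b i) ∧
      (∀ i, b i ≤ p * b (i + 1) ∨ (i ∈ L ∧ b i = 1 ∧ b (i + 1) = 0)) := by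
  let P : ℕ → Prop := fun n => ∃ b : ZMod f → ℕ, ∑ i, b i = n ∧ (∀ i ∈ L, 1 ≤ b i) ∧
    (∀ i, b i + 1 ≤ a i) ∧ (∀ i, p * b (i + 1) + a i ≤ p * a (i + 1) + b i)
  have hex : ∃ n, P n := by
    refine ⟨_, fun i => a i - 1, rfl, fun i hi => ?_, fun i => ?_, fun i => ?_⟩
    · have := hL i hi; dsimp only; omega
    · have := ha i; dsimp only; omega
    · dsimp only
      have h1 := ha i
      have h2 := ha (i + 1)
      have h3 : p * (a (i + 1) - 1) = p * a (i + 1) - p := by rw [Nat.mul_sub, mul_one]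
      have h4 : p * 1 ≤ p * a (i + 1) := Nat.mul_le_mul_left _ h2
      rw [h3]; omega
  obtain ⟨b, hsum, hb1, hb2, hb3⟩ := Nat.find_spec hex
  refine ⟨b, hb1, hb2, hb3, fun i => ?_⟩
  by_contra hcon
  push Not at hcon
  obtain ⟨hlt, hnot⟩ := hcon
  have hii : i + 1 ≠ i := by
    intro h
    rw [h] at hlt
    have : 1 * b i ≤ p * b i := Nat.mul_le_mul_right _ (by omega)
    omega
  -- lowering `b i` by one gives a smaller admissible vector
  have hbi : 1 ≤ b i := by omega
  have hlow : i ∈ L → 2 ≤ b i := by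
    intro hi
    by_contra h
    have h1 : b i = 1 := by omega
    refine hnot hi h1 ?_
    by_contra h2
    have h3 : p * 1 ≤ p * b (i + 1) := Nat.mul_le_mul_left _ (by omega)
    omega
  have hle : ∀ j, Function.update b i (b i - 1) j ≤ b j := by
    intro j
    by_cases h : j = i
    · subst h; simp
    · simp [h]
  refine Nat.find_min hex (m := ∑ j, Function.update b i (b i - 1) j) ?_
    ⟨_, rfl, fun j hj => ?_, fun j => ?_, fun j => ?_⟩
  · rw [← hsum]
    refine Finset.sum_lt_sum (fun j _ => hle j) ⟨i, Finset.mem_univ _, ?_⟩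
    simp; omega
  · by_cases h : j = i
    · subst h; have := hlow hj; simp; omega
    · simp [h, hb1 j hj]
  · have := hle j; have := hb2 j; omega
  · by_cases h : j = i
    · subst h
      have := hγ j
      simp only [Function.update_self, Function.update_of_ne hii]
      omega
    · have h1 := hb3 j
      have h2 : p * Function.update b i (b i - 1) (j + 1) ≤ p * b (j + 1) :=
        Nat.mul_le_mul_left _ (hle _)
      simp only [Function.update_of_ne h]
      omega
end Weights2

/-! ### Packings and relabelling -/

/-- The part of `S` with label `m`. -/
noncomputable def part {ι : Type} (S : Finset ι) (g : ι → ℕ) (m : ℕ) : Finset ι :=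
  S.filter (fun y => g y = m)

/-- A labelling `g` of `S` by `0, …, d` whose parts with labels `1, …, d` are nonempty and
valid. -/
def IsPack {ι : Type} {f : ℕ} (p : ℕ) (ty : ι → ZMod f) (d : ℕ) (S : Finset ι) (g : ι → ℕ) :
    Prop :=
  (∀ y ∈ S, g y ≤ d) ∧ ∀ m, 1 ≤ m → m ≤ d → (part S g m).Nonempty ∧ Valid p ty (part S g m)

section Exchange
variable {ι : Type} {f : ℕ} [NeZero f] {p : ℕ} {ty : ι → ZMod f}

lemma mem_part {S : Finset ι} {g : ι → ℕ} {m : ℕ} {y : ι} :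
    y ∈ part S g m ↔ y ∈ S ∧ g y = m := Finset.mem_filter

/-- The relabelling at the heart of the exchange: for each type `e ∈ J`, a chain of elements
`v e 1, v e 2, …, v e (l e - 1)` of type `e` moves up by one part each, the elements satisfying
`inW` or `inN` are thrown into part `1`, and `x` is discarded. -/
lemma shift_exists (d : ℕ) (S : Finset ι) (g : ι → ℕ) (Low inW inN : ι → Prop) (x : ι)
    (hgd : ∀ y ∈ S, g y ≤ d) (hxg : g x = 1) (hd : 1 ≤ d)
    (hW : ∀ y, inW y → 2 ≤ g y) (hN : ∀ y, inN y → g y = 0 ∧ Low y)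
    (J : Finset (ZMod f)) (l : ZMod f → ℕ) (v : ZMod f → ℕ → ι)
    (hl : ∀ e ∈ J, 2 ≤ l e ∧ l e ≤ d)
    (hv : ∀ e ∈ J, ∀ m, 1 ≤ m → m < l e → v e m ∈ S ∧ ty (v e m) = e ∧ v e m ≠ x)
    (hv1 : ∀ e ∈ J, inW (v e 1) ∨ (g (v e 1) = 1 ∧ Low (v e 1)))
    (hv2 : ∀ e ∈ J, ∀ m, 2 ≤ m → m < l e → g (v e m) = m ∧ ¬ inW (v e m) ∧ Low (v e m)) :
    ∃ g' : ι → ℕ, g' x = 0 ∧ (∀ y ∈ S, y ≠ x → (1 ≤ g' y ↔ 1 ≤ g y ∨ inN y)) ∧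
      (∀ y ∈ S, g' y ≤ g y ∨ (Low y ∧ g' y ≤ g y + 1)) ∧ (∀ y ∈ S, g' y ≤ d) ∧
      ∀ m, 2 ≤ m → ∀ e, cnt ty e (part S g' m)
          + ((part S g m).filter (fun y => ty y = e ∧ inW y)).card
          + (if e ∈ J ∧ m < l e then 1 else 0)
        = cnt ty e (part S g m) + (if e ∈ J ∧ m ≤ l e then 1 else 0) := by
  set inV1 : ι → Prop := fun y => ty y ∈ J ∧ y = v (ty y) 1 with hV1
  set inV2 : ι → Prop := fun y => ty y ∈ J ∧ 2 ≤ g y ∧ g y < l (ty y) ∧ y = v (ty y) (g y)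
    with hV2
  set g' : ι → ℕ := fun y => if y = x then 0 else if inV1 y then 2 else
    if inV2 y then g y + 1 else if inW y ∨ inN y then 1 else g y with hg'
  have hV1' : ∀ y, inV1 y → inW y ∨ (g y = 1 ∧ Low y) := by
    rintro y ⟨h1, h2⟩
    have := hv1 _ h1
    rw [← h2] at this; exact this
  have hV2' : ∀ y, inV2 y → ¬ inW y ∧ Low y := by
    rintro y ⟨h1, h2, h3, h4⟩
    have := hv2 _ h1 _ h2 h3
    rw [← h4] at this; exact this.2
  refine ⟨g', by simp [hg'], ?_, ?_, ?_, ?_⟩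
  · intro y _ hyx
    have a1 := hV1' y
    have a2 := hW y
    have a3 := hN y
    have a4 : inV2 y → 2 ≤ g y := fun h => h.2.1
    simp only [hg', if_neg hyx]
    by_cases c1 : inV1 y
    · simp only [if_pos c1]
      rcases a1 c1 with h | h
      · have := a2 h; constructor <;> intro _ <;> omega
      · constructor <;> intro _ <;> omega
    · by_cases c2 : inV2 y
      · have := a4 c2
        simp only [if_neg c1, if_pos c2]; constructor <;> intro _ <;> omega
      · by_cases c3 : inW y
        · have := a2 c3
          simp only [if_neg c1, if_neg c2, c3, true_or, if_true]
          constructor <;> intro _ <;> omega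
        · simp only [if_neg c1, if_neg c2, c3, false_or]
          by_cases c4 : inN y
          · simp [c4]
          · simp [c4]
  · intro y hy
    have a1 := hV1' y
    have a2 := hW y
    have a3 := hN y
    have a4 := hV2' y
    simp only [hg']
    split_ifs with c0 c1 c2 c3
    · left; omega
    · rcases a1 c1 with h | h
      · left; exact a2 h
      · right; exact ⟨h.2, by omega⟩
    · right; exact ⟨(a4 c2).2, le_rfl⟩
    · rcases c3 with h | h
      · left; have := a2 h; omega
      · right; exact ⟨(a3 h).2, by omega⟩
    · left; exact le_rfl
  · intro y hy
    simp only [hg']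
    split_ifs with c0 c1 c2 c3
    · omega
    · have := hl _ c1.1; omega
    · have := hl _ c2.1; have := c2.2.2.1; omega
    · omega
    · exact hgd y hy
  · intro m hm e
    unfold cnt
    by_cases he : e ∈ J
    · obtain ⟨hl1, hl2⟩ := hl e he
      -- the labels below and above `l e` see one element leaving and one arriving
      set K := (part S g m).filter (fun y => ty y = e) with hK
      have hKm : ∀ y, y ∈ K ↔ (y ∈ S ∧ g y = m) ∧ ty y = e := by
        intro y; rw [hK, Finset.mem_filter, mem_part]
      have hset : (part S g' m).filter (fun y => ty y = e)
          = (K.filter (fun y => ¬ inW y ∧ ¬ (m < l e ∧ y = v e m)))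
            ∪ (if m ≤ l e then {v e (m - 1)} else ∅) := by
        ext y
        have hK' := hKm y
        simp only [Finset.mem_filter, mem_part, Finset.mem_union]
        have hif : y ∈ (if m ≤ l e then ({v e (m - 1)} : Finset ι) else ∅)
            ↔ m ≤ l e ∧ y = v e (m - 1) := by
          split_ifs with h <;> simp [h]
        rw [hif, hK']
        by_cases hye : ty y = e
        · have b1 : inV1 y ↔ y = v e 1 := by simp [hV1, hye, he]
          have b2 : inV2 y ↔ 2 ≤ g y ∧ g y < l e ∧ y = v e (g y) := by simp [hV2, hye, he]
          constructor
          · rintro ⟨⟨hyS, hgm⟩, -⟩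
            simp only [hg'] at hgm
            split_ifs at hgm with c0 c1 c2 c3
            · omega
            · right; subst hgm; exact ⟨hl1, b1.mp c1⟩
            · right; rw [b2] at c2; subst hgm; exact ⟨c2.2.1, by simpa using c2.2.2⟩
            · omega
            · left
              push Not at c3
              refine ⟨⟨⟨hyS, hgm⟩, hye⟩, c3.1, ?_⟩
              rintro ⟨h1, h2⟩
              exact c2 (b2.mpr ⟨by omega, by omega, by rw [hgm]; exact h2⟩)
          · rintro (⟨⟨⟨hyS, hgm⟩, -⟩, h2, h3⟩ | ⟨h1, h2⟩)
            · refine ⟨⟨hyS, ?_⟩, hye⟩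
              have c0 : y ≠ x := by rintro rfl; omega
              have c1 : ¬ inV1 y := by
                intro h; rcases hV1' y h with h | h
                · exact h2 h
                · omega
              have c2 : ¬ inV2 y := by
                intro h; rw [b2] at h; rw [hgm] at h; exact h3 ⟨h.2.1, h.2.2⟩
              have c3 : ¬ inN y := by
                intro h; have := (hN y h).1; omega
              simp [hg', c0, c1, c2, c3, h2, hgm]
            · have hvv := hv e he (m - 1) (by omega) (by omega)
              rw [← h2] at hvv
              refine ⟨⟨hvv.1, ?_⟩, hye⟩
              by_cases hm2 : m = 2
              · have c1 : inV1 y := b1.mpr (by rw [h2, hm2])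
                simp [hg', hvv.2.2, c1, hm2]
              · have hv2' := hv2 e he (m - 1) (by omega) (by omega)
                rw [← h2] at hv2'
                have c1 : ¬ inV1 y := by
                  intro h; rcases hV1' y h with h | h
                  · exact hv2'.2.1 h
                  · omega
                have c2 : inV2 y := b2.mpr ⟨by omega, by omega, by rw [hv2'.1]; exact h2⟩
                simp only [hg', if_neg hvv.2.2, if_neg c1, if_pos c2, hv2'.1]
                omega
        · constructor
          · rintro ⟨_, h⟩; exact absurd h hye
          · rintro (⟨⟨_, h⟩, _⟩ | ⟨h1, h2⟩)
            · exact absurd h hye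
            · have hvv := hv e he (m - 1) (by omega) (by omega)
              rw [← h2] at hvv
              exact absurd hvv.2.1 hye
      have hdis : Disjoint (K.filter (fun y => ¬ inW y ∧ ¬ (m < l e ∧ y = v e m)))
            (if m ≤ l e then {v e (m - 1)} else ∅) := by
        split_ifs with h
        · rw [Finset.disjoint_singleton_right]
          intro hmem
          rw [Finset.mem_filter, hKm] at hmem
          by_cases hm2 : m = 2
          · subst hm2
            rcases hv1 e he with h' | h'
            · exact hmem.2.1 h'
            · have := hmem.1.1.2; simp at this; omega
          · have := (hv2 e he (m - 1) (by omega) (by omega)).1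
            have := hmem.1.1.2
            omega
        · simp
      rw [hset, Finset.card_union_of_disjoint hdis]
      have hcard2 : (if m ≤ l e then ({v e (m - 1)} : Finset ι) else ∅).card
          = if e ∈ J ∧ m ≤ l e then 1 else 0 := by
        simp only [he, true_and]; split_ifs <;> simp
      rw [hcard2]
      have hW' : (part S g m).filter (fun y => ty y = e ∧ inW y) = K.filter inW := by
        rw [hK, Finset.filter_filter]
      rw [hW']
      have hsplit := Finset.card_filter_add_card_filter_not (s := K) inW
      have h3 : (K.filter (fun y => ¬ inW y ∧ ¬ (m < l e ∧ y = v e m))).card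
          + (if e ∈ J ∧ m < l e then 1 else 0) = (K.filter (fun y => ¬ inW y)).card := by
        simp only [he, true_and]
        split_ifs with hml
        · have hvv := hv e he m (by omega) hml
          have hvw := hv2 e he m hm hml
          have : K.filter (fun y => ¬ inW y ∧ ¬ (m < l e ∧ y = v e m))
              = (K.filter (fun y => ¬ inW y)).erase (v e m) := by
            ext y; simp only [Finset.mem_filter, Finset.mem_erase, hml, true_and]; tauto
          rw [this]
          apply Finset.card_erase_add_one
          rw [Finset.mem_filter, hKm]
          exact ⟨⟨⟨hvv.1, hvw.1⟩, hvv.2.1⟩, hvw.2.1⟩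
        · simp [hml]
      omega
    · simp only [he, false_and, if_false, add_zero]
      have hset : (part S g' m).filter (fun y => ty y = e)
          = ((part S g m).filter (fun y => ty y = e)).filter (fun y => ¬ inW y) := by
        ext y
        simp only [Finset.mem_filter, mem_part]
        by_cases hye : ty y = e
        · have b1 : ¬ inV1 y := by simp [hV1, hye, he]
          have b2 : ¬ inV2 y := by simp [hV2, hye, he]
          simp only [hye, and_true]
          constructor
          · rintro ⟨hyS, hgm⟩
            simp only [hg', if_neg b1, if_neg b2] at hgm
            split_ifs at hgm with c0 c3
            · omega
            · omega
            · push Not at c3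
              exact ⟨⟨hyS, hgm⟩, c3.1⟩
          · rintro ⟨⟨hyS, hgm⟩, h2⟩
            have c0 : y ≠ x := by rintro rfl; omega
            have c3 : ¬ inN y := by
                intro h; have := (hN y h).1; omega
            exact ⟨hyS, by simp [hg', b1, b2, c0, c3, h2, hgm]⟩
        · simp [hye]
      rw [hset, ← Finset.filter_filter]
      have := Finset.card_filter_add_card_filter_not (s := (part S g m).filter (fun y => ty y = e)) inW
      omega

/-- A labelling whose part `1` merely has large weight can be thinned out to a packing. -/
lemma thin_pack (hp : 2 ≤ p) {d : ℕ} {S : Finset ι} {g : ι → ℕ}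
    (hgd : ∀ y ∈ S, g y ≤ d)
    (h2 : ∀ m, 2 ≤ m → m ≤ d → (part S g m).Nonempty ∧ Valid p ty (part S g m))
    (h1 : ∀ i, p ^ f - 1 ≤ W p ty i (part S g 1)) :
    ∃ g', IsPack p ty d S g' ∧ ∀ y, g' y ≤ g y := by
  obtain ⟨B, hB, hBn, hBv⟩ := exists_valid_subset hp _ h1
  refine ⟨fun y => if g y = 1 ∧ y ∉ B then 0 else g y, ⟨fun y hy => ?_, fun m hm hmd => ?_⟩,
    fun y => ?_⟩
  · dsimp only; split_ifs
    · omega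
    · exact hgd y hy
  · by_cases hm1 : m = 1
    · have : part S (fun y => if g y = 1 ∧ y ∉ B then 0 else g y) m = B := by
        ext y
        rw [mem_part]
        constructor
        · rintro ⟨h3, h4⟩
          split_ifs at h4 with h5
          · omega
          · by_contra h6; exact h5 ⟨by omega, h6⟩
        · intro h
          have := mem_part.mp (hB h)
          exact ⟨this.1, by simp [h, this.2, hm1]⟩
      rw [this]; exact ⟨hBn, hBv⟩
    · have : part S (fun y => if g y = 1 ∧ y ∉ B then 0 else g y) m = part S g m := by
        ext y
        rw [mem_part, mem_part]
        refine and_congr_right fun _ => ?_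
        split_ifs with h5
        · constructor <;> intro _ <;> omega
        · rfl
      rw [this]; exact h2 m (by omega) hmd
  · dsimp only; split_ifs <;> omega

lemma W_labels {d : ℕ} {S : Finset ι} {g : ι → ℕ} (hgd : ∀ y ∈ S, g y ≤ d) (i : ZMod f) :
    W p ty i (S.filter (fun y => 1 ≤ g y)) = ∑ m ∈ Finset.Icc 1 d, W p ty i (part S g m) := by
  unfold W
  rw [← Finset.sum_fiberwise_of_maps_to (t := Finset.Icc 1 d) (g := g)]
  · refine Finset.sum_congr rfl fun m hm => Finset.sum_congr ?_ fun _ _ => rfl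
    rw [Finset.mem_Icc] at hm
    ext y
    simp only [Finset.mem_filter, mem_part]
    constructor
    · rintro ⟨⟨h1, h2⟩, h3⟩; exact ⟨h1, h3⟩
    · rintro ⟨h1, h2⟩; exact ⟨⟨h1, by omega⟩, h2⟩
  · intro y hy
    rw [Finset.mem_filter] at hy
    exact Finset.mem_Icc.mpr ⟨hy.2, hgd y hy.1⟩

end Exchange

/-! ### The exchange step -/

section Exchange2
variable {ι : Type} {f : ℕ} [NeZero f] {p : ℕ} {ty : ι → ZMod f}

/-- The multiplicities `a_i = W_i(A) / (q - 1)` of a valid set determine its type counts. -/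
lemma Valid.mult (hp : 2 ≤ p) {A : Finset ι} (hA : A.Nonempty) (hv : Valid p ty A) :
    ∃ a : ZMod f → ℕ, (∀ i, W p ty i A = (p ^ f - 1) * a i) ∧ (∀ i, 1 ≤ a i) ∧
      ∀ i, cnt ty i A + a i = p * a (i + 1) := by
  have hQ : 1 ≤ p ^ f - 1 := Q_pos hp
  choose a ha using hv
  refine ⟨a, ha, fun i => ?_, fun i => ?_⟩
  · by_contra h
    have h0 : a i = 0 := by omega
    have h1 := Valid.le hp (fun i => ⟨a i, ha i⟩) hA i
    rw [ha i, h0] at h1; omega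
  · have h := W_step (ty := ty) hp i A
    rw [ha, ha] at h
    have : (p ^ f - 1) * (cnt ty i A + a i) = (p ^ f - 1) * (p * a (i + 1)) := by
      rw [mul_add]; linarith
    exact Nat.eq_of_mul_eq_mul_left (by omega) this

/-- The exchange step: if discarding `x` from part `1` and adding the unused low elements
leaves enough weight for `d` parts, there is a packing which discards `x`, and in which only low
elements move up, by at most one part each. -/
lemma exchange (hp : 2 ≤ p) {d : ℕ} {S : Finset ι} {g : ι → ℕ} (hg : IsPack p ty d S g)
    (Low : ι → Prop) {x : ι} (hx : x ∈ S) (hgx : g x = 1) (hxL : ¬ Low x)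
    (N : Finset ι) (hNmem : ∀ y, y ∈ N ↔ y ∈ S ∧ g y = 0 ∧ Low y)
    (hW : ∀ i, d * (p ^ f - 1) ≤ W p ty i ((S.filter (fun y => 1 ≤ g y)).erase x ∪ N))
    (hlow : ∀ e, e ≠ ty x → W p ty e N < p ^ gap e (ty x) →
      ∀ y ∈ S, 1 ≤ g y → ty y = e → Low y)
    (hN : N = ∅ → (∀ y ∈ S, 2 ≤ g y → ty y = ty x → Low y) ∧
      ∀ B ⊆ S, (∀ y ∈ B, g y = 1 ∧ ty y = ty x ∧ ¬ Low y) → B.card ≤ p - 1) :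
    ∃ g', IsPack p ty d S g' ∧ g' x = 0 ∧
      ∀ y ∈ S, g' y ≤ g y ∨ (Low y ∧ g' y ≤ g y + 1) := by
  have hQ : 1 ≤ p ^ f - 1 := Q_pos hp
  have hcast : ((p ^ f - 1 : ℕ) : ℤ) = (p : ℤ) ^ f - 1 := by
    rw [Nat.cast_sub (Nat.one_le_pow _ _ (by omega))]; simp
  have hd : 1 ≤ d := by have := hg.1 x hx; omega
  have hpow : ∀ i, p ^ gap i (ty x) ≤ p ^ f - 1 := fun i => pow_gap_le hp _ _
  set Q := p ^ f - 1 with hQdef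
  -- multiplicities of the parts
  have hmult : ∀ m, ∃ a : ZMod f → ℕ, 1 ≤ m → m ≤ d →
      (∀ i, W p ty i (part S g m) = Q * a i) ∧ (∀ i, 1 ≤ a i) ∧
      ∀ i, cnt ty i (part S g m) + a i = p * a (i + 1) := by
    intro m
    by_cases h : 1 ≤ m ∧ m ≤ d
    · obtain ⟨a, ha⟩ := Valid.mult hp (hg.2 m h.1 h.2).1 (hg.2 m h.1 h.2).2
      exact ⟨a, fun _ _ => ha⟩
    · exact ⟨0, fun h1 h2 => absurd ⟨h1, h2⟩ h⟩
  choose a ha using hmult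
  have hx1 : x ∈ part S g 1 := mem_part.mpr ⟨hx, hgx⟩
  have hT : ∀ i, W p ty i ((S.filter (fun y => 1 ≤ g y)).erase x ∪ N) + p ^ gap i (ty x)
      = W p ty i (S.filter (fun y => 1 ≤ g y)) + W p ty i N := by
    intro i
    rw [W_union, ← W_erase (p := p) (ty := ty) (i := i) (A := S.filter (fun y => 1 ≤ g y))
      (x := x) (Finset.mem_filter.mpr ⟨hx, by omega⟩)]
    · ring
    · rw [Finset.disjoint_left]
      intro y hy hyN
      have h1 := (Finset.mem_filter.mp (Finset.mem_of_mem_erase hy)).2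
      have h2 := ((hNmem y).mp hyN).2.1
      omega
  have hX : ∀ i, W p ty i ((part S g 1).erase x ∪ N) + p ^ gap i (ty x)
      = W p ty i (part S g 1) + W p ty i N := by
    intro i
    rw [W_union, ← W_erase (p := p) (ty := ty) (i := i) hx1]
    · ring
    · rw [Finset.disjoint_left]
      intro y hy hyN
      have h1 := (mem_part.mp (Finset.mem_of_mem_erase hy)).2
      have h2 := ((hNmem y).mp hyN).2.1
      omega
  -- the types at which part `1` alone would become too small
  set I : Finset (ZMod f) :=
    Finset.univ.filter (fun i => W p ty i ((part S g 1).erase x ∪ N) < Q) with hI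
  have hImem : ∀ i, i ∈ I ↔ W p ty i ((part S g 1).erase x ∪ N) < Q := fun i => by simp [hI]
  have hI1 : ∀ i ∈ I, a 1 i = 1 := by
    intro i hi
    rw [hImem] at hi
    obtain ⟨h1, h2, h3⟩ := ha 1 le_rfl hd
    have h4 := hX i
    rw [h1 i] at h4
    by_contra h5
    have h6 : Q * 2 ≤ Q * a 1 i := Nat.mul_le_mul_left _ (by have := h2 i; omega)
    have := hpow i
    omega
  have hIN : ∀ i ∈ I, W p ty i N < p ^ gap i (ty x) := by
    intro i hi
    have h0 := hI1 i hi
    rw [hImem] at hi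
    obtain ⟨h1, h2, h3⟩ := ha 1 le_rfl hd
    have h4 := hX i
    rw [h1 i, h0] at h4
    omega
  have hIex : ∀ i ∈ I, ∃ m, 2 ≤ m ∧ m ≤ d ∧ 2 ≤ a m i := by
    intro i hi
    by_contra hno
    push Not at hno
    have h1 : ∀ m ∈ Finset.Icc 1 d, W p ty i (part S g m) = Q := by
      intro m hm
      rw [Finset.mem_Icc] at hm
      obtain ⟨h1, h2, h3⟩ := ha m hm.1 hm.2
      have h4 : a m i = 1 := by
        by_cases hm1 : m = 1
        · rw [hm1]; exact hI1 i hi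
        · have := hno m (by omega) hm.2
          have := h2 i
          omega
      rw [h1, h4, mul_one]
    have h2 := hT i
    rw [W_labels hg.1, Finset.sum_congr rfl h1] at h2
    simp only [Finset.sum_const, Nat.card_Icc, add_tsub_cancel_right, smul_eq_mul] at h2
    have h3 := hW i
    have h4 := hIN i hi
    omega
  have hl0 : ∀ i, ∃ l, i ∈ I → 2 ≤ l ∧ l ≤ d ∧ 2 ≤ a l i ∧ ∀ m, 2 ≤ m → m < l → a m i = 1 := by
    intro i
    by_cases hi : i ∈ I
    · have hex := hIex i hi
      refine ⟨Nat.find hex, fun _ => ?_⟩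
      obtain ⟨h1, h2, h3⟩ := Nat.find_spec hex
      refine ⟨h1, h2, h3, fun m hm hml => ?_⟩
      have h4 := Nat.find_min hex hml
      have h5 := (ha m (by omega) (by omega)).2.1 i
      by_contra h6
      exact h4 ⟨hm, by omega, by omega⟩
    · exact ⟨0, fun h => absurd h hi⟩
  choose l0 hl0 using hl0
  -- the type of `x` borrows from the same part as its successor whenever it can
  set ex : Prop := ty x + 1 ∈ I ∧ 2 ≤ a (l0 (ty x + 1)) (ty x) with hex
  set l : ZMod f → ℕ := fun e => if e = ty x ∧ ex then l0 (ty x + 1) else l0 e with hldef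
  have hl : ∀ e ∈ I, 2 ≤ l e ∧ l e ≤ d ∧ 2 ≤ a (l e) e := by
    intro e he
    simp only [hldef]
    split_ifs with h
    · have := hl0 _ h.2.1
      exact ⟨this.1, this.2.1, by rw [h.1]; exact h.2.2⟩
    · have := hl0 _ he
      exact ⟨this.1, this.2.1, this.2.2.1⟩
  -- what is split off from the parts `2, …, d`
  have hb : ∀ m, ∃ b : ZMod f → ℕ, 2 ≤ m → m ≤ d → (∀ i ∈ I, l i = m → 1 ≤ b i) ∧
      (∀ i, b i + 1 ≤ a m i) ∧ (∀ i, p * b (i + 1) + a m i ≤ p * a m (i + 1) + b i) ∧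
      (∀ i, b i ≤ p * b (i + 1) ∨ ((i ∈ I ∧ l i = m) ∧ b i = 1 ∧ b (i + 1) = 0)) := by
    intro m
    by_cases h : 2 ≤ m ∧ m ≤ d
    · obtain ⟨h1, h2, h3⟩ := ha m (by omega) h.2
      obtain ⟨b, h4, h5, h6, h7⟩ := exists_split hp (a m) (I.filter (fun i => l i = m)) h2
        (fun i hi => by
          rw [Finset.mem_filter] at hi
          have := (hl i hi.1).2.2
          rwa [hi.2] at this) (fun i => by have := h3 i; omega)
      refine ⟨b, fun _ _ => ⟨fun i hi hli => h4 i (Finset.mem_filter.mpr ⟨hi, hli⟩), h5, h6,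
        fun i => ?_⟩⟩
      have := h7 i
      rwa [Finset.mem_filter] at this
    · exact ⟨0, fun h1 h2 => absurd ⟨h1, h2⟩ h⟩
  choose b hb using hb
  have hWt : ∀ m e, ∃ w : Finset ι, 2 ≤ m → m ≤ d →
      w ⊆ (part S g m).filter (fun y => ty y = e) ∧ w.card = p * b m (e + 1) - b m e := by
    intro m e
    by_cases h : 2 ≤ m ∧ m ≤ d
    · obtain ⟨h1, h2, h3⟩ := ha m (by omega) h.2
      obtain ⟨h4, h5, h6, h7⟩ := hb m h.1 h.2
      have hle : p * b m (e + 1) - b m e ≤ ((part S g m).filter (fun y => ty y = e)).card := by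
        have h8 := h3 e
        unfold cnt at h8
        have h9 := h6 e
        omega
      obtain ⟨w, hw⟩ := Finset.exists_subset_card_eq hle
      exact ⟨w, fun _ _ => hw⟩
    · exact ⟨∅, fun h1 h2 => absurd ⟨h1, h2⟩ h⟩
  choose Wt hWt using hWt
  set inW : ι → Prop := fun y => 2 ≤ g y ∧ g y ≤ d ∧ y ∈ Wt (g y) (ty y) with hinW
  have hinWS : ∀ m e, 2 ≤ m → m ≤ d → ∀ y ∈ Wt m e, y ∈ S ∧ g y = m ∧ ty y = e ∧ inW y := by
    intro m e h1 h2 y hy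
    have h3 := (hWt m e h1 h2).1 hy
    rw [Finset.mem_filter, mem_part] at h3
    obtain ⟨⟨h4, h5⟩, h6⟩ := h3
    exact ⟨h4, h5, h6, by omega, by omega, by rw [h5, h6]; exact hy⟩
  have hWcard : ∀ m e, 2 ≤ m → m ≤ d →
      ((part S g m).filter (fun y => ty y = e ∧ inW y)).card = p * b m (e + 1) - b m e := by
    intro m e h1 h2
    rw [← (hWt m e h1 h2).2]
    congr 1
    ext y
    simp only [Finset.mem_filter, mem_part]
    constructor
    · rintro ⟨⟨h3, h4⟩, h5, h6⟩
      have := h6.2.2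
      rwa [h4, h5] at this
    · intro h
      obtain ⟨h3, h4, h5, h6⟩ := hinWS m e h1 h2 y h
      exact ⟨⟨h3, h4⟩, h5, h6⟩
  -- the types of which one element is missing in part `l e`
  set J : Finset (ZMod f) := I.filter (fun e => b (l e) e = 1 ∧ b (l e) (e + 1) = 0) with hJ
  have hJmem : ∀ e, e ∈ J ↔ e ∈ I ∧ b (l e) e = 1 ∧ b (l e) (e + 1) = 0 := fun e => by
    rw [hJ, Finset.mem_filter]
  -- the exceptional choice of `l` never leads to a missing element
  have hJex : ∀ e ∈ J, ¬ (e = ty x ∧ ex) := by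
    intro e he
    rw [hJmem] at he
    rintro ⟨h1, h2⟩
    have h3 : l e = l0 (ty x + 1) := by simp only [hldef]; rw [if_pos ⟨h1, h2⟩]
    have h4 : l (e + 1) = l0 (ty x + 1) := by
      simp only [hldef]; rw [h1]; split_ifs <;> rfl
    obtain ⟨h5, h6, -⟩ := hl e he.1
    have h7 := (hb (l e) h5 h6).1 (e + 1) (by rw [h1]; exact h2.1) (by rw [h3, h4])
    omega
  have hJl : ∀ e ∈ J, l e = l0 e := fun e he => by
    simp only [hldef]
    rw [if_neg (hJex e he)]
  have hNτ : ty x ∈ I → N = ∅ := by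
    intro h
    have h1 := hIN _ h
    rw [gap_self, pow_zero] at h1
    by_contra h2
    obtain ⟨y, hy⟩ := Finset.nonempty_iff_ne_empty.mpr h2
    have h3 := W_mem (p := p) (ty := ty) (i := ty x) hy
    have h4 : 1 ≤ p ^ gap (ty x) (ty y) := Nat.one_le_pow _ _ (by omega)
    omega
  have hJlow : ∀ e ∈ J, ∀ y ∈ S, 2 ≤ g y → ty y = e → Low y := by
    intro e he y hy hgy hty
    have heI := ((hJmem e).mp he).1
    by_cases hτ : e = ty x
    · exact (hN (hNτ (hτ ▸ heI))).1 y hy hgy (by rw [hty, hτ])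
    · exact hlow e hτ (hIN e heI) y hy (by omega) hty
  have hvex2 : ∀ e ∈ J, ∀ m, 2 ≤ m → m < l e →
      ∃ v ∈ S, ty v = e ∧ v ≠ x ∧ g v = m ∧ ¬ inW v ∧ Low v := by
    intro e he m hm hml
    have heI := ((hJmem e).mp he).1
    have hmd : m ≤ d := by have := (hl e heI).2.1; omega
    have hae : a m e = 1 := (hl0 e heI).2.2.2 m hm (by rw [← hJl e he]; exact hml)
    obtain ⟨h1, h2, h3⟩ := ha m (by omega) hmd
    obtain ⟨h4, h5, h6, h7⟩ := hb m hm hmd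
    have h8 : ((part S g m).filter (fun y => ty y = e ∧ inW y)).card
        < ((part S g m).filter (fun y => ty y = e)).card := by
      rw [hWcard m e hm hmd]
      have h9 := h3 e
      unfold cnt at h9
      have h10 : p * (b m (e + 1) + 1) ≤ p * a m (e + 1) := Nat.mul_le_mul_left _ (h5 _)
      rw [mul_add] at h10
      omega
    have h9 : ∃ v ∈ (part S g m).filter (fun y => ty y = e), ¬ inW v := by
      by_contra hno
      push Not at hno
      refine absurd h8 (not_lt.mpr (Finset.card_le_card fun y hy => ?_))
      have := hno y hy
      rw [Finset.mem_filter] at hy ⊢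
      exact ⟨hy.1, hy.2, this⟩
    obtain ⟨v, hv, hvW⟩ := h9
    rw [Finset.mem_filter, mem_part] at hv
    obtain ⟨⟨hvS, hvg⟩, hvt⟩ := hv
    exact ⟨v, hvS, hvt, by rintro rfl; omega, hvg, hvW, hJlow e he v hvS (by omega) hvt⟩
  have hvex1 : ∀ e ∈ J, ∃ v ∈ S, ty v = e ∧ v ≠ x ∧ (inW v ∨ (g v = 1 ∧ Low v)) := by
    intro e he
    have heI := ((hJmem e).mp he).1
    obtain ⟨h1, h2, h3⟩ := ha 1 le_rfl hd
    have h4 := h3 e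
    rw [hI1 e heI] at h4
    have h5 : p * 1 ≤ p * a 1 (e + 1) := Nat.mul_le_mul_left _ (h2 _)
    by_cases hτ : e = ty x
    · have hNe := hN (hNτ (hτ ▸ heI))
      by_cases ha2 : 2 ≤ a 1 (e + 1)
      · have h6 : p * 2 ≤ p * a 1 (e + 1) := Nat.mul_le_mul_left _ ha2
        have h7 : ∃ v ∈ (part S g 1).filter (fun y => ty y = e), Low v := by
          by_contra hno
          push Not at hno
          have : cnt ty e (part S g 1) ≤ p - 1 := by
            refine hNe.2 _ (fun y hy => ?_) fun y hy => ?_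
            · rw [Finset.mem_filter, mem_part] at hy
              exact hy.1.1
            · have := hno y hy
              rw [Finset.mem_filter, mem_part] at hy
              exact ⟨hy.1.2, by rw [hy.2, hτ], this⟩
          omega
        obtain ⟨v, hv, hvL⟩ := h7
        rw [Finset.mem_filter, mem_part] at hv
        exact ⟨v, hv.1.1, hv.2, fun h => hxL (h ▸ hvL), Or.inr ⟨hv.1.2, hvL⟩⟩
      · -- then the successor type is deficient too, and its part provides the element
        have hτ1 : e + 1 ∈ I := by
          rw [hImem]
          have h6 := hX (e + 1)
          have h7 : a 1 (e + 1) = 1 := by have := h2 (e + 1); omega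
          rw [h1, h7, hNτ (hτ ▸ heI)] at h6
          have h8 : 1 ≤ p ^ gap (e + 1) (ty x) := Nat.one_le_pow _ _ (by omega)
          simp only [W, Finset.sum_empty] at h6 ⊢
          rw [hNτ (hτ ▸ heI)]
          omega
        have hnex : ¬ ex := fun h => hJex e he ⟨hτ, h⟩
        have hll : l (e + 1) = l0 (e + 1) := by simp [hldef, hnex]
        obtain ⟨h6, h7, -⟩ := hl _ hτ1
        obtain ⟨h8, h9, h10, -⟩ := hb _ h6 h7
        have h11 := h8 _ hτ1 rfl
        have h12 : b (l (e + 1)) e = 0 := by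
          have h13 := h9 e
          by_contra h14
          refine hnex ⟨hτ ▸ hτ1, ?_⟩
          rw [← hτ, ← hll]; omega
        have h13 := (hWt _ e h6 h7).2
        have h14 : p * 1 ≤ p * b (l (e + 1)) (e + 1) := Nat.mul_le_mul_left _ h11
        obtain ⟨v, hv⟩ := Finset.card_pos.mp (show 0 < (Wt (l (e + 1)) e).card by omega)
        obtain ⟨h15, h16, h17, h18⟩ := hinWS _ _ h6 h7 v hv
        exact ⟨v, h15, h17, by rintro rfl; omega, Or.inl h18⟩
    · have h6 : 0 < cnt ty e (part S g 1) := by omega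
      unfold cnt at h6
      obtain ⟨v, hv⟩ := Finset.card_pos.mp h6
      rw [Finset.mem_filter, mem_part] at hv
      exact ⟨v, hv.1.1, hv.2, fun h => hτ (by rw [← hv.2, h]), Or.inr ⟨hv.1.2,
        hlow e hτ (hIN e heI) v hv.1.1 (by omega) hv.2⟩⟩
  have hvex : ∀ e m, ∃ v, e ∈ J → 1 ≤ m → m < l e → v ∈ S ∧ ty v = e ∧ v ≠ x ∧
      (m = 1 → inW v ∨ (g v = 1 ∧ Low v)) ∧ (2 ≤ m → g v = m ∧ ¬ inW v ∧ Low v) := by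
    intro e m
    by_cases h : e ∈ J ∧ 1 ≤ m ∧ m < l e
    · by_cases hm : m = 1
      · obtain ⟨v, h1, h2, h3, h4⟩ := hvex1 e h.1
        exact ⟨v, fun _ _ _ => ⟨h1, h2, h3, fun _ => h4, fun _ => by omega⟩⟩
      · obtain ⟨v, h1, h2, h3, h4⟩ := hvex2 e h.1 m (by omega) h.2.2
        exact ⟨v, fun _ _ _ => ⟨h1, h2, h3, fun h => absurd h hm, fun _ => h4⟩⟩
    · exact ⟨x, fun h1 h2 h3 => absurd ⟨h1, h2, h3⟩ h⟩
  choose v hv using hvex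
  have hlJ : ∀ e ∈ J, 2 ≤ l e ∧ l e ≤ d := fun e he =>
    ⟨(hl e ((hJmem e).mp he).1).1, (hl e ((hJmem e).mp he).1).2.1⟩
  obtain ⟨g', hg'x, hg'T, hg'le, hg'd, hcnt⟩ := shift_exists d S g Low inW (fun y => y ∈ N) x
    hg.1 hgx hd (fun y hy => hy.1) (fun y hy => ((hNmem y).mp hy).2) J l v hlJ
    (fun e he m h1 h2 => ⟨(hv e m he h1 h2).1, (hv e m he h1 h2).2.1, (hv e m he h1 h2).2.2.1⟩)
    (fun e he => (hv e 1 he le_rfl (hlJ e he).1).2.2.2.1 rfl)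
    (fun e he m h1 h2 => (hv e m he (by omega) h2).2.2.2.2 h1)
  -- the new multiplicities of the parts `2, …, d` are `a - b`
  have hcnt' : ∀ m, 2 ≤ m → m ≤ d → ∀ e, (cnt ty e (part S g' m) : ℤ)
      = (p * (a m (e + 1) - b m (e + 1)) - (a m e - b m e) : ℤ) := by
    intro m hm hmd e
    have h0 := hcnt m hm e
    have hWc : ((part S g m).filter (fun y => ty y = e ∧ inW y)).card
        = p * b m (e + 1) - b m e := hWcard m e hm hmd
    have hcl : ∀ s t : Finset ι, s = t → s.card = t.card := fun s t h => by rw [h]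
    rw [hcl _ ((part S g m).filter (fun y => ty y = e ∧ inW y))
      (Finset.filter_congr_decidable _ _ _), hWc] at h0
    obtain ⟨h1, h2, h3⟩ := ha m (by omega) hmd
    obtain ⟨h4, h5, h6, h7⟩ := hb m hm hmd
    have h8 := h3 e
    have key : p * b m (e + 1) = (p * b m (e + 1) - b m e) + b m e ∧
          (e ∈ J ∧ m < l e ↔ e ∈ J ∧ m ≤ l e) ∨
        (p * b m (e + 1) = 0 ∧ b m e = 1 ∧ e ∈ J ∧ m = l e) := by
      rcases h7 e with h | ⟨⟨h, h'⟩, hx1, hz⟩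
      · by_cases hc : e ∈ J ∧ m = l e
        · right
          have := (hJmem e).mp hc.1
          rw [← hc.2] at this
          exact ⟨by rw [this.2.2, mul_zero], this.2.1, hc.1, hc.2⟩
        · left
          refine ⟨by omega, and_congr_right fun hJ' => ?_⟩
          have : m ≠ l e := fun h => hc ⟨hJ', h⟩
          omega
      · right
        refine ⟨by rw [hz, mul_zero], hx1, (hJmem e).mpr ⟨h, ?_⟩, h'.symm⟩
        rw [h']; exact ⟨hx1, hz⟩
    rcases key with ⟨k1, k2⟩ | ⟨k1, k2, k3, k4⟩
    · rw [if_congr k2 rfl rfl] at h0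
      zify at h0 h8 k1
      linarith
    · rw [if_neg (by omega), if_pos ⟨k3, by omega⟩, k1] at h0
      zify at h0 h8 k1 k2
      simp only [Nat.zero_sub] at h0
      push_cast at h0
      linarith
  have hWnew : ∀ m, 2 ≤ m → m ≤ d → ∀ i,
      W p ty i (part S g' m) + Q * b m i = Q * a m i := by
    intro m hm hmd i
    have h1 := sum_gamma p (fun e => (a m e : ℤ) - b m e) i
    have h2 := W_eq_sum_cnt (p := p) (ty := ty) i (part S g' m)
    zify at h2 ⊢
    rw [h2, Finset.sum_congr rfl (fun e _ => by rw [hcnt' m hm hmd e]), h1, hcast]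
    ring
  obtain ⟨gThin, hgThin, hle⟩ := thin_pack (p := p) (ty := ty) hp hg'd (fun m hm hmd => by
      obtain ⟨h4, h5, h6, h7⟩ := hb m hm hmd
      constructor
      · by_contra hno
        rw [Finset.not_nonempty_iff_eq_empty] at hno
        have h8 := hWnew m hm hmd 0
        rw [hno] at h8
        have h9 : Q * (b m 0 + 1) ≤ Q * a m 0 := Nat.mul_le_mul_left _ (h5 0)
        rw [mul_add] at h9
        simp only [W, Finset.sum_empty] at h8
        omega
      · intro i
        exact (Nat.dvd_add_left (Dvd.intro _ rfl)).mp (Dvd.intro _ (hWnew m hm hmd i).symm))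
    (fun i => by
      have h1 := W_labels (p := p) (ty := ty) hg'd i
      have hseteq : S.filter (fun y => 1 ≤ g' y)
          = (S.filter (fun y => 1 ≤ g y)).erase x ∪ N := by
        ext y
        simp only [Finset.mem_filter, Finset.mem_union, Finset.mem_erase]
        have hNy := hNmem y
        by_cases hyx : y = x
        · subst hyx
          have : y ∉ N := fun h => hxL (hNy.mp h).2.2
          simp [hg'x, this]
        · constructor
          · rintro ⟨h2, h3⟩
            rcases (hg'T y h2 hyx).mp h3 with h | h
            · exact Or.inl ⟨hyx, h2, h⟩
            · exact Or.inr h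
          · rintro (⟨_, h2, h3⟩ | h)
            · exact ⟨h2, (hg'T y h2 hyx).mpr (Or.inl h3)⟩
            · exact ⟨(hNy.mp h).1, (hg'T y (hNy.mp h).1 hyx).mpr (Or.inr h)⟩
      have h2 := hT i
      rw [← hseteq, h1, W_labels hg.1] at h2
      have h3 := hX i
      have hIcc : Finset.Icc 1 d = insert 1 (Finset.Icc 2 d) := by
        ext m; simp only [Finset.mem_Icc, Finset.mem_insert]; omega
      have h1n : 1 ∉ Finset.Icc 2 d := by simp
      rw [hIcc, Finset.sum_insert h1n, Finset.sum_insert h1n] at h2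
      have h4 : ∑ m ∈ Finset.Icc 2 d, W p ty i (part S g' m) + ∑ m ∈ Finset.Icc 2 d, Q * b m i
          = ∑ m ∈ Finset.Icc 2 d, W p ty i (part S g m) := by
        rw [← Finset.sum_add_distrib]
        refine Finset.sum_congr rfl fun m hm => ?_
        rw [Finset.mem_Icc] at hm
        rw [hWnew m hm.1 hm.2, (ha m (by omega) hm.2).1]
      by_cases hi : i ∈ I
      · obtain ⟨h5, h6, h7⟩ := hl i hi
        have h8 : Q * b (l i) i ≤ ∑ m ∈ Finset.Icc 2 d, Q * b m i :=
          Finset.single_le_sum (f := fun m => Q * b m i) (fun _ _ => Nat.zero_le _)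
            (Finset.mem_Icc.mpr ⟨h5, h6⟩)
        have h9 : Q * 1 ≤ Q * b (l i) i := Nat.mul_le_mul_left _ ((hb _ h5 h6).1 i hi rfl)
        omega
      · rw [hImem] at hi
        omega)
  exact ⟨gThin, hgThin, by have := hle x; omega, fun y hy => by
    have := hle y
    rcases hg'le y hy with h | h
    · left; omega
    · right; exact ⟨h.1, by omega⟩⟩

end Exchange2

/-! ### Packings of minimal cost -/

/-- The cost `∑ g(y) p^(pos y)` of a labelling. -/
def cost {ι : Type} (p : ℕ) (pos : ι → ℕ) (S : Finset ι) (g : ι → ℕ) : ℕ :=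
  ∑ y ∈ S, g y * p ^ pos y

/-- A packing of minimal cost; the type of an element is its position modulo `f`. -/
def IsOpt {ι : Type} (f p : ℕ) (pos : ι → ℕ) (d : ℕ) (S : Finset ι) (g : ι → ℕ) : Prop :=
  IsPack p (fun y => (pos y : ZMod f)) d S g ∧
    ∀ g', IsPack p (fun y => (pos y : ZMod f)) d S g' → cost p pos S g ≤ cost p pos S g'

/-- At most `p - 1` elements of `S` share a position, as for base-`p` digits. -/
def Fib {ι : Type} (p : ℕ) (pos : ι → ℕ) (S : Finset ι) : Prop :=
  ∀ h, (S.filter (fun y => pos y = h)).card ≤ p - 1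

/-- The used elements of `S`, together with all elements at positions below `h`. -/
noncomputable def Om {ι : Type} (pos : ι → ℕ) (S : Finset ι) (g : ι → ℕ) (h : ℕ) : Finset ι :=
  S.filter (fun y => pos y < h ∨ 1 ≤ g y)

/-- The statement that no used element `x` of an optimal packing with `d` parts can be spared:
the other used elements together with everything below `x` do not carry enough weight. -/
def Rigid (ι : Type) (f p : ℕ) (pos : ι → ℕ) (d : ℕ) : Prop :=
  ∀ (S : Finset ι) (g : ι → ℕ), Fib p pos S → IsOpt f p pos d S g → ∀ x ∈ S, 1 ≤ g x →
    ∃ i, W p (fun y => (pos y : ZMod f)) i ((Om pos S g (pos x)).erase x) < d * (p ^ f - 1)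

section Opt
variable {ι : Type} {f : ℕ} [NeZero f] {p : ℕ} {pos : ι → ℕ}

lemma exists_opt {d : ℕ} {S : Finset ι} {g : ι → ℕ} (hg : IsPack p (fun y => ((pos y : ℕ) : ZMod f)) d S g) :
    ∃ o, IsOpt f p pos d S o := by
  have hex : ∃ n, ∃ o, IsPack p (fun y => ((pos y : ℕ) : ZMod f)) d S o ∧ cost p pos S o = n := ⟨_, g, hg, rfl⟩
  obtain ⟨o, h1, h2⟩ := Nat.find_spec hex
  refine ⟨o, h1, fun g' hg' => ?_⟩
  rw [h2]
  exact Nat.find_min' hex ⟨g', hg', rfl⟩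

lemma Fib.mono {S T : Finset ι} (h : Fib p pos S) (hT : T ⊆ S) : Fib p pos T := fun n =>
  le_trans (Finset.card_le_card (Finset.filter_subset_filter _ hT)) (h n)

lemma IsPack.le_W (hp : 2 ≤ p) {ty : ι → ZMod f} {d : ℕ} {S : Finset ι} {g : ι → ℕ}
    (hg : IsPack p ty d S g) (i : ZMod f) :
    d * (p ^ f - 1) ≤ W p ty i (S.filter (fun y => 1 ≤ g y)) := by
  rw [W_labels hg.1]
  calc d * (p ^ f - 1) = ∑ m ∈ Finset.Icc 1 d, (p ^ f - 1) := by simp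
    _ ≤ _ := Finset.sum_le_sum fun m hm => by
      rw [Finset.mem_Icc] at hm
      have := hg.2 m hm.1 hm.2
      exact Valid.le hp this.2 this.1 i

lemma IsPack.dvd_W {ty : ι → ZMod f} {d : ℕ} {S : Finset ι} {g : ι → ℕ}
    (hg : IsPack p ty d S g) (i : ZMod f) :
    (p ^ f - 1) ∣ W p ty i (S.filter (fun y => 1 ≤ g y)) := by
  rw [W_labels hg.1]
  refine Finset.dvd_sum fun m hm => ?_
  rw [Finset.mem_Icc] at hm
  exact (hg.2 m hm.1 hm.2).2 i

lemma part_pred {S : Finset ι} {g : ι → ℕ} {m : ℕ} :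
    part (S.filter (fun y => 1 ≤ g y)) (fun y => g y - 1) m = part S g (m + 1) := by
  ext y
  simp only [mem_part, Finset.mem_filter]
  constructor
  · rintro ⟨⟨h1, h2⟩, h3⟩; exact ⟨h1, by omega⟩
  · rintro ⟨h1, h2⟩; exact ⟨⟨h1, by omega⟩, by omega⟩

lemma IsPack.pred {ty : ι → ZMod f} {d : ℕ} {S : Finset ι} {g : ι → ℕ}
    (hg : IsPack p ty (d + 1) S g) :
    IsPack p ty d (S.filter (fun y => 1 ≤ g y)) (fun y => g y - 1) := by
  refine ⟨fun y hy => ?_, fun m hm hmd => ?_⟩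
  · have := hg.1 y (Finset.mem_filter.mp hy).1
    dsimp only; omega
  · rw [part_pred]; exact hg.2 (m + 1) (by omega) (by omega)

/-- Dropping the unused elements of an optimal packing, and letting its first part become the
unused one, gives an optimal packing, provided that packings with one part fewer are rigid. -/
lemma IsOpt.pred (hp : 2 ≤ p) {d : ℕ} (hR : Rigid ι f p pos d) {S : Finset ι} {g : ι → ℕ}
    (hF : Fib p pos S) (hg : IsOpt f p pos (d + 1) S g) :
    IsOpt f p pos d (S.filter (fun y => 1 ≤ g y)) (fun y => g y - 1) := by
  have hQ : 1 ≤ p ^ f - 1 := Q_pos hp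
  have hpack := hg.1.pred
  set T := S.filter (fun y => 1 ≤ g y) with hT
  obtain ⟨o, ho⟩ := exists_opt hpack
  have hFT : Fib p pos T := hF.mono (Finset.filter_subset _ _)
  have hTle := hg.1.le_W hp
  rw [← hT] at hTle
  -- an optimal packing of `T` does not use all of `T`
  have hno : (part T o 0).Nonempty := by
    by_contra hcon
    rw [Finset.not_nonempty_iff_eq_empty] at hcon
    have hall : ∀ y ∈ T, 1 ≤ o y := by
      intro y hy
      by_contra h
      have : y ∈ part T o 0 := mem_part.mpr ⟨hy, by omega⟩
      rw [hcon] at this; simp at this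
    obtain ⟨x, hx⟩ := (hg.1.2 1 le_rfl (by omega)).1
    have hxT : x ∈ T := by
      rw [mem_part] at hx
      exact Finset.mem_filter.mpr ⟨hx.1, by omega⟩
    obtain ⟨i, hi⟩ := hR T o hFT ho x hxT (hall x hxT)
    have hOm : Om pos T o (pos x) = T := by
      unfold Om
      exact Finset.filter_true_of_mem fun y hy => Or.inr (hall y hy)
    rw [hOm] at hi
    have h1 := W_erase (p := p) (ty := (fun y => ((pos y : ℕ) : ZMod f))) (i := i) hxT
    have h2 := hTle i
    have h3 := pow_gap_le (f := f) hp i ((pos x : ℕ) : ZMod f)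
    rw [add_mul] at h2
    omega
  set o' : ι → ℕ := fun y => if y ∈ T then o y + 1 else 0 with ho'
  have hpart : ∀ m, part S o' (m + 1) = part T o m := by
    intro m
    ext y
    simp only [mem_part, ho']
    constructor
    · rintro ⟨h1, h2⟩
      split_ifs at h2 with h3
      exact ⟨h3, by omega⟩
    · rintro ⟨h1, h2⟩
      exact ⟨(Finset.mem_filter.mp h1).1, by rw [if_pos h1, h2]⟩
  have hpo' : IsPack p (fun y => ((pos y : ℕ) : ZMod f)) (d + 1) S o' := by
    refine ⟨fun y hy => ?_, fun m hm hmd => ?_⟩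
    · simp only [ho']; split_ifs with h
      · have := ho.1.1 y h; omega
      · omega
    · obtain ⟨n, rfl⟩ : ∃ n, m = n + 1 := ⟨m - 1, by omega⟩
      rw [hpart]
      by_cases hn : n = 0
      · subst hn
        refine ⟨hno, fun i => ?_⟩
        have h1 : W p (fun y => ((pos y : ℕ) : ZMod f)) i T = W p (fun y => ((pos y : ℕ) : ZMod f)) i (part T o 0)
            + W p (fun y => ((pos y : ℕ) : ZMod f)) i (T.filter (fun y => 1 ≤ o y)) := by
          rw [← W_union]
          · congr 1
            ext y
            simp only [mem_part, Finset.mem_union, Finset.mem_filter]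
            constructor
            · intro h
              rcases Nat.eq_zero_or_pos (o y) with h' | h'
              · exact Or.inl ⟨h, h'⟩
              · exact Or.inr ⟨h, h'⟩
            · rintro (h | h) <;> exact h.1
          · rw [Finset.disjoint_left]
            intro y hy hy'
            have h2 := (mem_part.mp hy).2
            have h3 := (Finset.mem_filter.mp hy').2
            omega
        have h2 := hg.1.dvd_W i
        rw [← hT, h1] at h2
        exact (Nat.dvd_add_left (ho.1.dvd_W i)).mp h2
      · exact ho.1.2 n (by omega) (by omega)
  have hcost : ∀ u : ι → ℕ, ∑ y ∈ T, (u y + 1) * p ^ pos y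
      = cost p pos T u + ∑ y ∈ T, p ^ pos y := by
    intro u
    unfold cost
    rw [← Finset.sum_add_distrib]
    exact Finset.sum_congr rfl fun y _ => by ring
  have hc1 : cost p pos S o' = cost p pos T o + ∑ y ∈ T, p ^ pos y := by
    rw [← hcost]
    unfold cost
    symm
    rw [← Finset.sum_subset (Finset.filter_subset (fun y => 1 ≤ g y) S)]
    · refine Finset.sum_congr rfl fun y hy => ?_
      simp only [ho']; rw [if_pos hy]
    · intro y _ hy
      simp only [ho']; rw [if_neg hy, zero_mul]
  have hc2 : cost p pos S g = cost p pos T (fun y => g y - 1) + ∑ y ∈ T, p ^ pos y := by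
    rw [← hcost]
    unfold cost
    symm
    rw [← Finset.sum_subset (Finset.filter_subset (fun y => 1 ≤ g y) S)]
    · refine Finset.sum_congr rfl fun y hy => ?_
      have := (Finset.mem_filter.mp hy).2
      rw [Nat.sub_add_cancel this]
    · intro y hyS hy
      have : g y = 0 := by
        by_contra h
        exact hy (Finset.mem_filter.mpr ⟨hyS, by omega⟩)
      rw [this, zero_mul]
  refine ⟨hpack, fun g' hg' => ?_⟩
  have h1 := hg.2 o' hpo'
  have h2 := ho.2 g' hg'
  omega

/-- Digits below position `h` represent a number smaller than `p^h`. -/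
lemma sum_low_lt (hp : 2 ≤ p) {S : Finset ι} (hF : Fib p pos S) (h : ℕ) :
    ∑ y ∈ S.filter (fun y => pos y < h), p ^ pos y < p ^ h := by
  induction h with
  | zero => simp
  | succ h ih =>
    have h1 : S.filter (fun y => pos y < h + 1)
        = S.filter (fun y => pos y < h) ∪ S.filter (fun y => pos y = h) := by
      ext y; simp only [Finset.mem_filter, Finset.mem_union, ← and_or_left]
      refine and_congr_right fun _ => by omega
    rw [h1, Finset.sum_union]
    · have h2 : ∑ y ∈ S.filter (fun y => pos y = h), p ^ pos y ≤ (p - 1) * p ^ h := by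
        rw [Finset.sum_congr rfl (g := fun _ => p ^ h)]
        · rw [Finset.sum_const, smul_eq_mul]
          exact Nat.mul_le_mul_right _ (hF h)
        · intro y hy; rw [(Finset.mem_filter.mp hy).2]
      have h3 : p ^ (h + 1) = (p - 1) * p ^ h + p ^ h := by
        rw [pow_succ']
        obtain ⟨n, rfl⟩ : ∃ n, p = n + 1 := ⟨p - 1, by omega⟩
        simp; ring
      omega
    · rw [Finset.disjoint_left]
      intro y hy hy'
      have h2 := (Finset.mem_filter.mp hy).2
      have h3 := (Finset.mem_filter.mp hy').2
      omega

/-- A labelling that discards `x`, and raises labels only below `x` and by at most one, is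
cheaper. -/
lemma cost_lt (hp : 2 ≤ p) {S : Finset ι} (hF : Fib p pos S) {g g' : ι → ℕ} {x : ι}
    (hx : x ∈ S) (hgx : 1 ≤ g x) (hx' : g' x = 0)
    (h : ∀ y ∈ S, g' y ≤ g y ∨ (pos y < pos x ∧ g' y ≤ g y + 1)) :
    cost p pos S g' < cost p pos S g := by
  have h1 : ∀ y ∈ S, g' y * p ^ pos y + (if y = x then p ^ pos x else 0)
      ≤ g y * p ^ pos y + (if pos y < pos x then p ^ pos y else 0) := by
    intro y hy
    by_cases hyx : y = x
    · subst hyx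
      simp only [hx', zero_mul, lt_irrefl, if_true, if_false, zero_add, add_zero]
      exact Nat.le_mul_of_pos_left _ hgx
    · rw [if_neg hyx, add_zero]
      rcases h y hy with h2 | ⟨h2, h3⟩
      · exact le_trans (Nat.mul_le_mul_right _ h2) (Nat.le_add_right _ _)
      · rw [if_pos h2]
        calc g' y * p ^ pos y ≤ (g y + 1) * p ^ pos y := Nat.mul_le_mul_right _ h3
          _ = _ := by ring
  have h2 := Finset.sum_le_sum h1
  rw [Finset.sum_add_distrib, Finset.sum_add_distrib, Finset.sum_ite_eq' S x, if_pos hx,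
    ← Finset.sum_filter] at h2
  have h3 := sum_low_lt hp hF (pos x)
  unfold cost
  omega

end Opt

/-! ### Rigidity of packings of minimal cost -/

section RigidProof
variable {ι : Type} {f : ℕ} [NeZero f] {p : ℕ} {pos : ι → ℕ}

/-- If a set of weight `q - 1` at `i` misses the type `e`, its elements whose types come before `e`
when counting from `i` carry at least the weight of `e`: otherwise the weight modulo
`p^(gap i e + 1)` could not be `-1`. -/
lemma weight_below (hp : 2 ≤ p) {ty : ι → ZMod f} {A : Finset ι} {i e : ZMod f}
    (hW : W p ty i A = p ^ f - 1) (hA : ∀ y ∈ A, ty y ≠ e) :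
    p ^ gap i e ≤ W p ty i (A.filter (fun y => gap i (ty y) < gap i e)) := by
  have h1 : W p ty i A = W p ty i (A.filter (fun y => gap i (ty y) < gap i e))
      + W p ty i (A.filter (fun y => ¬ gap i (ty y) < gap i e)) :=
    (Finset.sum_filter_add_sum_filter_not _ _ _).symm
  have h2 : p ^ (gap i e + 1) ∣ W p ty i (A.filter (fun y => ¬ gap i (ty y) < gap i e)) := by
    refine Finset.dvd_sum fun y hy => ?_
    rw [Finset.mem_filter] at hy
    refine pow_dvd_pow _ ?_
    have h3 : gap i (ty y) ≠ gap i e := by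
      intro h
      apply hA y hy.1
      unfold gap at h
      have := ZMod.val_injective f h
      simpa using this
    omega
  have h3 : p ^ (gap i e + 1) ∣ p ^ f := pow_dvd_pow _ (gap_lt i e)
  have h4 : 1 ≤ p ^ f := Nat.one_le_pow _ _ (by omega)
  have h5 : p ^ (gap i e + 1) ∣ W p ty i (A.filter (fun y => gap i (ty y) < gap i e)) + 1 := by
    have : p ^ f = (W p ty i (A.filter (fun y => gap i (ty y) < gap i e)) + 1)
      + W p ty i (A.filter (fun y => ¬ gap i (ty y) < gap i e)) := by omega
    rw [this] at h3
    exact (Nat.dvd_add_left h2).mp h3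
  have h6 := Nat.le_of_dvd (by omega) h5
  have h7 : 2 * p ^ gap i e ≤ p ^ (gap i e + 1) := by
    rw [pow_succ']; exact Nat.mul_le_mul_right _ hp
  have h8 : 1 ≤ p ^ gap i e := Nat.one_le_pow _ _ (by omega)
  omega

/-- No used element of an optimal packing can be spared. -/
theorem rigid (hp : 2 ≤ p) (d : ℕ) : Rigid ι f p pos d := by
  induction d with
  | zero =>
    intro S g _ hg x hx hgx
    have := hg.1.1 x hx
    omega
  | succ d hR =>
    intro S g hF hg x0 hx0 hgx0
    by_contra hcon
    have hQ : 1 ≤ p ^ f - 1 := Q_pos hp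
    have hpow : ∀ i e : ZMod f, p ^ gap i e ≤ p ^ f - 1 := fun i e => pow_gap_le hp _ _
    have hpinj : ∀ {a b : ℕ}, p ^ a < p ^ b → a < b := fun h =>
      (Nat.pow_lt_pow_iff_right (by omega)).mp h
    obtain ⟨ty, hty⟩ : ∃ ty : ι → ZMod f, ty = fun y => ((pos y : ℕ) : ZMod f) := ⟨_, rfl⟩
    have htyp : ∀ y z, pos y = pos z → ty y = ty z := fun y z h => by rw [hty]; simp only [h]
    have hopt := hg.pred hp hR hF
    obtain ⟨hgp, hgopt⟩ := hg
    rw [← hty] at hcon hgp hgopt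
    have hlabels := W_labels (p := p) (ty := ty) hgp.1
    have hpartle : ∀ m, 1 ≤ m → m ≤ d + 1 → ∀ i, p ^ f - 1 ≤ W p ty i (part S g m) :=
      fun m h1 h2 i => Valid.le hp (hgp.2 m h1 h2).2 (hgp.2 m h1 h2).1 i
    have hTle := hgp.le_W hp
    have hTdvd := hgp.dvd_W
    set Q := p ^ f - 1 with hQdef
    set T := S.filter (fun y => 1 ≤ g y) with hT
    have hTmem : ∀ y, y ∈ T ↔ y ∈ S ∧ 1 ≤ g y := fun y => by rw [hT, Finset.mem_filter]
    have hFT : Fib p pos T := hF.mono (Finset.filter_subset _ _)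
    have hR' : ∀ y ∈ T, 2 ≤ g y → ∃ i,
        W p ty i ((Om pos T (fun y => g y - 1) (pos y)).erase y) < d * Q := by
      intro y hy hgy
      rw [hty]
      exact hR T _ hFT hopt y hy (by omega)
    -- a spare element `x` of maximal position and, there, of minimal label
    set V := T.filter (fun y => ∀ i, (d + 1) * Q ≤ W p ty i ((Om pos S g (pos y)).erase y))
      with hV
    have hVne : V.Nonempty := by
      refine ⟨x0, Finset.mem_filter.mpr ⟨(hTmem x0).mpr ⟨hx0, hgx0⟩, fun i => ?_⟩⟩
      by_contra h
      exact hcon ⟨i, by omega⟩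
    obtain ⟨x1, hx1, hmax⟩ := Finset.exists_max_image V pos hVne
    obtain ⟨x, hx, hmin⟩ := Finset.exists_min_image (V.filter (fun y => pos y = pos x1)) g
      ⟨x1, Finset.mem_filter.mpr ⟨hx1, rfl⟩⟩
    rw [Finset.mem_filter] at hx
    obtain ⟨hxV, hxpos⟩ := hx
    have hxT : x ∈ T := (Finset.mem_filter.mp hxV).1
    have hxW := (Finset.mem_filter.mp hxV).2
    obtain ⟨hxS, hgx⟩ := (hTmem x).mp hxT
    have hOmmem : ∀ y h, y ∈ Om pos S g h ↔ y ∈ S ∧ (pos y < h ∨ 1 ≤ g y) := fun y h => by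
      unfold Om; rw [Finset.mem_filter]
    have hming : ∀ y ∈ T, pos y = pos x → g x ≤ g y := by
      intro y hy hyp
      refine hmin y (Finset.mem_filter.mpr ⟨Finset.mem_filter.mpr ⟨hy, fun i => ?_⟩, by omega⟩)
      have h1 := W_erase (p := p) (ty := ty) (i := i) (A := Om pos S g (pos y)) (x := y)
        ((hOmmem _ _).mpr ⟨((hTmem y).mp hy).1, Or.inr ((hTmem y).mp hy).2⟩)
      have h2 := W_erase (p := p) (ty := ty) (i := i) (A := Om pos S g (pos x)) (x := x)
        ((hOmmem _ _).mpr ⟨hxS, Or.inr hgx⟩)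
      have h3 := hxW i
      rw [hyp, htyp y x hyp] at h1
      rw [hyp]
      omega
    set h := pos x with hh
    set N := S.filter (fun y => g y = 0 ∧ pos y < h) with hN
    have hNmem : ∀ y, y ∈ N ↔ y ∈ S ∧ g y = 0 ∧ pos y < h := fun y => by
      rw [hN, Finset.mem_filter]
    have hOmTN : Om pos S g h = T ∪ N := by
      ext y
      rw [hOmmem, Finset.mem_union, hTmem, hNmem]
      constructor
      · rintro ⟨h1, h2⟩
        rcases Nat.eq_zero_or_pos (g y) with h3 | h3
        · right; exact ⟨h1, h3, by omega⟩
        · left; exact ⟨h1, h3⟩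
      · rintro (⟨h1, h2⟩ | ⟨h1, h2, h3⟩)
        · exact ⟨h1, Or.inr h2⟩
        · exact ⟨h1, Or.inl h3⟩
    have hTN : Disjoint T N := by
      rw [Finset.disjoint_left]
      intro y hy hy'
      have h1 := ((hTmem y).mp hy).2
      have h2 := ((hNmem y).mp hy').2.1
      omega
    have hxN : ∀ i, (d + 1) * Q + p ^ gap i (ty x) ≤ W p ty i T + W p ty i N := by
      intro i
      have h1 := W_erase (p := p) (ty := ty) (i := i) (A := Om pos S g h) (x := x)
        ((hOmmem _ _).mpr ⟨hxS, Or.inr hgx⟩)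
      have h2 := hxW i
      rw [hOmTN] at h1 h2
      rw [W_union hTN] at h1
      omega
    -- an element above `x` cannot be spared, which bounds the weight of `N`
    have hup : ∀ r, ∃ i, r ∈ T → h < pos r →
        (∀ m, 1 ≤ m → m ≤ d + 1 → W p ty i (part S g m) = Q) ∧
        W p ty i N < p ^ gap i (ty r) ∧ p ^ gap i (ty x) ≤ W p ty i N := by
      intro r
      by_cases hr : r ∈ T ∧ h < pos r
      · obtain ⟨hrT, hrp⟩ := hr
        have h1 : r ∉ V := by
          intro hrV
          have := hmax r hrV
          omega
        have h2 : ∃ i, W p ty i ((Om pos S g (pos r)).erase r) < (d + 1) * Q := by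
          by_contra hno
          push Not at hno
          exact h1 (Finset.mem_filter.mpr ⟨hrT, hno⟩)
        obtain ⟨i, hi⟩ := h2
        have h3 : W p ty i ((T ∪ N).erase r) ≤ W p ty i ((Om pos S g (pos r)).erase r) := by
          refine W_mono (Finset.erase_subset_erase _ ?_)
          rw [← hOmTN]
          intro y hy
          rw [hOmmem] at hy ⊢
          exact ⟨hy.1, by rcases hy.2 with h | h <;> omega⟩
        have h4 := W_erase (p := p) (ty := ty) (i := i) (A := T ∪ N) (x := r)
          (Finset.mem_union_left _ hrT)
        rw [W_union hTN] at h4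
        have h5 := hpow i (ty r)
        have h6 := hTle i
        have h7 : W p ty i T = (d + 1) * Q := by
          obtain ⟨c, hc⟩ := hTdvd i
          have h8 : c < d + 2 := by
            have : Q * c < Q * (d + 2) := by
              rw [← hc]
              have : Q * (d + 2) = (d + 1) * Q + Q := by ring
              omega
            exact lt_of_mul_lt_mul_left this (Nat.zero_le _)
          have h9 : Q * c ≤ Q * (d + 1) := Nat.mul_le_mul_left _ (by omega)
          rw [mul_comm Q (d + 1)] at h9
          omega
        refine ⟨i, fun _ _ => ⟨fun m hm hmd => ?_, by omega, ?_⟩⟩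
        · have h8 := hlabels i
          rw [h7, ← Finset.sum_erase_add _ _ (Finset.mem_Icc.mpr ⟨hm, hmd⟩)] at h8
          have h9 : d * Q ≤ ∑ n ∈ (Finset.Icc 1 (d + 1)).erase m, W p ty i (part S g n) := by
            calc d * Q = ∑ n ∈ (Finset.Icc 1 (d + 1)).erase m, Q := by
                  rw [Finset.sum_const, Finset.card_erase_of_mem (Finset.mem_Icc.mpr ⟨hm, hmd⟩)]
                  simp
              _ ≤ _ := Finset.sum_le_sum fun n hn => by
                have := Finset.mem_Icc.mp (Finset.mem_of_mem_erase hn)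
                exact hpartle n this.1 this.2 i
          have h10 := hpartle m hm hmd i
          rw [add_mul] at h8
          omega
        · have := hxN i
          omega
      · exact ⟨0, fun h1 h2 => absurd ⟨h1, h2⟩ hr⟩
    choose I hup using hup
    have hgapup : ∀ r ∈ T, h < pos r → gap (I r) (ty x) < gap (I r) (ty r) := fun r hr hrp =>
      hpinj (lt_of_le_of_lt (hup r hr hrp).2.2 (hup r hr hrp).2.1)
    have hOm' : ∀ y, y ∈ Om pos T (fun y => g y - 1) h ↔ y ∈ T ∧ (pos y < h ∨ 2 ≤ g y) := by
      intro y
      unfold Om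
      rw [Finset.mem_filter]
      refine and_congr_right fun _ => or_congr_right ?_
      dsimp only; omega
    have hg1 : g x = 1 := by
      by_contra hg1
      have hA1 : ∀ y, y ∈ part S g 1 → y ∈ T ∧ pos y ≠ h := by
        intro y hy
        rw [mem_part] at hy
        have hyT := (hTmem y).mpr ⟨hy.1, by omega⟩
        refine ⟨hyT, fun hyp => ?_⟩
        have := hming y hyT hyp
        omega
      obtain ⟨i, hi⟩ := hR' x hxT (by omega)
      -- the low elements of the first part are lighter than `x`
      have hlt : W p ty i ((part S g 1).filter (fun y => pos y < h)) < p ^ gap i (ty x) := by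
        have h1 : Om pos T (fun y => g y - 1) h
            = T.filter (fun y => 1 ≤ g y - 1) ∪ (part S g 1).filter (fun y => pos y < h) := by
          ext y
          rw [hOm', Finset.mem_union, Finset.mem_filter (s := T),
            Finset.mem_filter (s := part S g 1), mem_part, hTmem]
          constructor
          · rintro ⟨⟨h1, h2⟩, h3⟩
            by_cases h4 : 2 ≤ g y
            · exact Or.inl ⟨⟨h1, h2⟩, by omega⟩
            · exact Or.inr ⟨⟨h1, by omega⟩, by omega⟩
          · rintro (⟨⟨h1, h2⟩, h3⟩ | ⟨⟨h1, h2⟩, h3⟩)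
            · exact ⟨⟨h1, h2⟩, Or.inr (by omega)⟩
            · exact ⟨⟨h1, by omega⟩, Or.inl h3⟩
        have h2 : Disjoint (T.filter (fun y => 1 ≤ g y - 1))
            ((part S g 1).filter (fun y => pos y < h)) := by
          rw [Finset.disjoint_left]
          intro y hy hy'
          have h3 := (Finset.mem_filter.mp hy).2
          have h4 := (mem_part.mp (Finset.mem_filter.mp hy').1).2
          omega
        have h3 := W_erase (p := p) (ty := ty) (i := i) (A := Om pos T (fun y => g y - 1) h)
          (x := x) ((hOm' x).mpr ⟨hxT, Or.inr (by omega)⟩)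
        have h4 : d * Q ≤ W p ty i (T.filter (fun y => 1 ≤ g y - 1)) := hgp.pred.le_W hp i
        rw [← hh, h1] at hi
        rw [h1, W_union h2] at h3
        omega
      have hnotype : ∀ y ∈ part S g 1, ty y ≠ ty x := by
        intro y hy hyx
        obtain ⟨hyT, hyp⟩ := hA1 y hy
        rcases Nat.lt_or_ge (pos y) h with h1 | h1
        · have h2 := W_mem (p := p) (ty := ty) (i := i)
            (Finset.mem_filter.mpr ⟨hy, h1⟩ : y ∈ (part S g 1).filter (fun y => pos y < h))
          rw [hyx] at h2
          omega
        · have := hgapup y hyT (by omega)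
          rw [hyx] at this
          omega
      have hBne : ((part S g 1).filter (fun y => h < pos y)).Nonempty := by
        by_contra hno
        rw [Finset.not_nonempty_iff_eq_empty, Finset.filter_eq_empty_iff] at hno
        have h1 : (part S g 1).filter (fun y => pos y < h) = part S g 1 := by
          refine Finset.filter_true_of_mem fun y hy => ?_
          have h2 := hno hy
          have h3 := (hA1 y hy).2
          omega
        rw [h1] at hlt
        have h2 := hpartle 1 le_rfl (by omega) i
        have h3 := hpow i (ty x)
        omega
      obtain ⟨r, hr, hrmin⟩ := Finset.exists_min_image _ (fun r => gap (I r) (ty x)) hBne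
      rw [Finset.mem_filter] at hr
      have hrT := (hA1 r hr.1).1
      have hrW := (hup r hrT hr.2).1 1 le_rfl (by omega)
      have hbelow := weight_below hp hrW hnotype
      by_cases hall : ∀ y ∈ (part S g 1).filter (fun y => gap (I r) (ty y) < gap (I r) (ty x)),
          pos y < h
      · -- all these elements are low, and their weights at `I r` and at `i` are proportional
        set Y := (part S g 1).filter (fun y => gap (I r) (ty y) < gap (I r) (ty x)) with hY
        have h1 : W p ty i Y < p ^ gap i (ty x) := by
          refine lt_of_le_of_lt (W_mono fun y hy => ?_) hlt
          exact Finset.mem_filter.mpr ⟨(Finset.mem_filter.mp hy).1, hall y hy⟩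
        have h2 : p ^ gap i (ty x) * W p ty (I r) Y = p ^ gap (I r) (ty x) * W p ty i Y := by
          unfold W
          rw [Finset.mul_sum, Finset.mul_sum]
          refine Finset.sum_congr rfl fun y hy => ?_
          rw [← pow_add, ← pow_add]
          congr 1
          have h3 : gap i (ty y) < gap i (ty x) :=
            hpinj (lt_of_le_of_lt (W_mem (ty := ty) hy) h1)
          have h4 := (Finset.mem_filter.mp hy).2
          have h5 := gap_rel i (ty y) (ty x)
          have h6 := gap_rel (I r) (ty y) (ty x)
          have h7 := gap_lt (ty y) (ty x)
          omega
        have h3 : p ^ gap (I r) (ty x) * W p ty i Y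
            < p ^ gap (I r) (ty x) * p ^ gap i (ty x) :=
          Nat.mul_lt_mul_of_pos_left h1 (Nat.pow_pos (by omega))
        have h4 : p ^ gap i (ty x) * p ^ gap (I r) (ty x) ≤ p ^ gap i (ty x) * W p ty (I r) Y :=
          Nat.mul_le_mul_left _ hbelow
        rw [h2] at h4
        rw [mul_comm] at h4
        omega
      · push Not at hall
        obtain ⟨r2, hr2, hr2p⟩ := hall
        rw [Finset.mem_filter] at hr2
        obtain ⟨hr2T, hr2h⟩ := hA1 r2 hr2.1
        have hr2p' : h < pos r2 := by omega
        have h1 := hrmin r2 (Finset.mem_filter.mpr ⟨hr2.1, hr2p'⟩)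
        have h2 := hgapup r2 hr2T hr2p'
        have h3 := gap_rel (I r) (ty r2) (ty x)
        have h4 := gap_rel (I r2) (ty r2) (ty x)
        have h5 := gap_lt (I r2) (ty r2)
        have h6 := gap_lt (ty r2) (ty x)
        omega
    have hlow : ∀ e, e ≠ ty x → W p ty e N < p ^ gap e (ty x) →
        ∀ y ∈ S, 1 ≤ g y → ty y = e → pos y < h := by
      intro e hex heN y hyS hgy hye
      by_contra hnl
      have hyT := (hTmem y).mpr ⟨hyS, hgy⟩
      have hyp : h < pos y := by
        rcases Nat.lt_or_ge h (pos y) with h1 | h1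
        · exact h1
        · exfalso
          apply hex
          have : pos y = pos x := by omega
          rw [← hye]; exact htyp _ _ this
      obtain ⟨h1, h2, h3⟩ := hup y hyT hyp
      have hgx' := hgapup y hyT hyp
      rw [hye] at h2 hgx'
      set i := I y
      -- seen from `i`, all of `N` and `x` lie before `e`, so the weights at `e` and at `i`
      -- are proportional
      have key : ∀ z : ZMod f, gap i z < gap i e → gap i e + gap e z = gap i z + f := by
        intro z hz
        have := gap_rel i e z
        omega
      have h4 : p ^ gap i e * W p ty e N = p ^ f * W p ty i N := by
        unfold W
        rw [Finset.mul_sum, Finset.mul_sum]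
        refine Finset.sum_congr rfl fun n hn => ?_
        rw [← pow_add, ← pow_add, key, add_comm]
        exact hpinj (lt_of_le_of_lt (W_mem (ty := ty) hn) h2)
      have h5 : p ^ gap i e * p ^ gap e (ty x) = p ^ f * p ^ gap i (ty x) := by
        rw [← pow_add, ← pow_add, key _ hgx', add_comm]
      have h6 : p ^ gap i e * W p ty e N < p ^ gap i e * p ^ gap e (ty x) :=
        Nat.mul_lt_mul_of_pos_left heN (Nat.pow_pos (by omega))
      rw [h4, h5] at h6
      have h7 := lt_of_mul_lt_mul_left h6 (Nat.zero_le _)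
      omega
    have hNe : N = ∅ → (∀ y ∈ S, 2 ≤ g y → ty y = ty x → pos y < h) ∧
        ∀ B ⊆ S, (∀ y ∈ B, g y = 1 ∧ ty y = ty x ∧ ¬ pos y < h) → B.card ≤ p - 1 := by
      intro hNemp
      have hnoup : ∀ y ∈ T, pos y ≤ h := by
        intro y hy
        by_contra hy'
        have h1 := (hup y hy (by omega)).2.2
        rw [hNemp] at h1
        have h2 : 0 < p ^ gap (I y) (ty x) := Nat.pow_pos (by omega)
        simp only [W, Finset.sum_empty] at h1
        omega
      refine ⟨fun y hyS hgy _ => ?_, ?_⟩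
      · by_contra hnl
        have hyT := (hTmem y).mpr ⟨hyS, by omega⟩
        have hyp : pos y = h := le_antisymm (hnoup y hyT) (by omega)
        obtain ⟨i, hi⟩ := hR' y hyT hgy
        rw [hyp] at hi
        -- at most `p - 1` elements, all at position `h`, are missing
        have h1 : W p ty i T ≤ W p ty i ((Om pos T (fun y => g y - 1) h).erase y)
            + W p ty i (T.filter (fun y => pos y = h)) := by
          have hun : ∀ A B : Finset ι, W p ty i (A ∪ B) ≤ W p ty i A + W p ty i B := by
            intro A B
            unfold W
            rw [← Finset.sum_union_inter]
            exact Nat.le_add_right _ _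
          refine le_trans (W_mono fun z hz => ?_) (hun _ _)
          rw [Finset.mem_union, Finset.mem_erase, hOm']
          by_cases hzh : pos z = h
          · exact Or.inr (Finset.mem_filter.mpr ⟨hz, hzh⟩)
          · left
            refine ⟨fun hzy => hzh (by rw [hzy, hyp]), hz, Or.inl ?_⟩
            have := hnoup z hz
            omega
        have h2 : W p ty i (T.filter (fun y => pos y = h)) ≤ Q := by
          have h3 : W p ty i (T.filter (fun y => pos y = h)) ≤ (p - 1) * p ^ gap i (ty x) := by
            unfold W
            rw [Finset.sum_congr rfl (g := fun _ => p ^ gap i (ty x))]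
            · rw [Finset.sum_const, smul_eq_mul]
              exact Nat.mul_le_mul_right _ (hFT h)
            · intro z hz
              rw [htyp z x (Finset.mem_filter.mp hz).2]
          have h4 : (p - 1) * p ^ gap i (ty x) + p ^ gap i (ty x) = p ^ (gap i (ty x) + 1) := by
            rw [pow_succ']
            obtain ⟨n, rfl⟩ : ∃ n, p = n + 1 := ⟨p - 1, by omega⟩
            simp; ring
          have h5 : p ^ (gap i (ty x) + 1) ≤ p ^ f := Nat.pow_le_pow_right (by omega) (gap_lt _ _)
          have h6 : 1 ≤ p ^ gap i (ty x) := Nat.one_le_pow _ _ (by omega)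
          omega
        have h3 := hTle i
        rw [add_mul] at h3
        omega
      · intro B hB hB'
        refine le_trans (Finset.card_le_card fun y hy => ?_) (hF h)
        rw [Finset.mem_filter]
        have h1 := hB' y hy
        have := hnoup y ((hTmem y).mpr ⟨hB hy, by omega⟩)
        exact ⟨hB hy, by omega⟩
    have hxlow : ¬ pos x < h := by omega
    obtain ⟨g', hg', hg'x, hg'le⟩ := exchange hp hgp (fun y => pos y < h) hxS hg1 hxlow N hNmem
      (fun i => by
        have h1 := hxW i
        rw [hOmTN, Finset.erase_union_distrib, Finset.erase_eq_of_notMem (s := N)] at h1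
        · exact h1
        · intro h2
          have := ((hNmem x).mp h2).2.1
          omega) hlow hNe
    have h1 := hgopt g' hg'
    have h2 := cost_lt hp hF hxS hgx hg'x hg'le
    omega

end RigidProof

/-! ### Digits and position counts -/

/-- The number `∑ p^(pos y)` represented by a finite set of placed units. -/
def val {ι : Type} (p : ℕ) (pos : ι → ℕ) (A : Finset ι) : ℕ := ∑ y ∈ A, p ^ pos y

/-- The number of units at position `h`. -/
noncomputable def cc {ι : Type} (pos : ι → ℕ) (h : ℕ) (A : Finset ι) : ℕ :=
  (A.filter (fun y => pos y = h)).card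

section Digits
variable {ι : Type} {f : ℕ} [NeZero f] {p : ℕ} {pos : ι → ℕ}

/-- Without carrying, the digits of the represented number are the position counts. -/
lemma digit_val (hp : 2 ≤ p) {A : Finset ι} (hA : Fib p pos A) (h : ℕ) :
    val p pos A / p ^ h % p = cc pos h A := by
  have h1 : val p pos A = ∑ y ∈ A.filter (fun y => pos y < h), p ^ pos y
      + (cc pos h A * p ^ h + ∑ y ∈ A.filter (fun y => h < pos y), p ^ pos y) := by
    unfold val cc
    rw [← Finset.sum_filter_add_sum_filter_not A (fun y => pos y < h)]
    congr 1
    rw [← Finset.sum_filter_add_sum_filter_not (A.filter (fun y => ¬ pos y < h))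
      (fun y => pos y = h)]
    rw [Finset.filter_filter, Finset.filter_filter]
    congr 1
    · have : A.filter (fun y => ¬ pos y < h ∧ pos y = h) = A.filter (fun y => pos y = h) := by
        refine Finset.filter_congr fun y _ => ?_
        omega
      rw [this, Finset.sum_congr rfl (g := fun _ => p ^ h), Finset.sum_const, smul_eq_mul]
      intro y hy
      rw [(Finset.mem_filter.mp hy).2]
    · refine Finset.sum_congr (Finset.filter_congr fun y _ => ?_) fun _ _ => rfl
      omega
  have h2 : ∑ y ∈ A.filter (fun y => pos y < h), p ^ pos y < p ^ h :=
    sum_low_lt hp hA h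
  obtain ⟨c, hc⟩ : p ^ (h + 1) ∣ ∑ y ∈ A.filter (fun y => h < pos y), p ^ pos y :=
    Finset.dvd_sum fun y hy => pow_dvd_pow _ (Finset.mem_filter.mp hy).2
  have h3 : cc pos h A < p := by
    have := hA h
    unfold cc; omega
  have hph : 0 < p ^ h := pow_pos (by omega) _
  rw [h1, hc]
  have h4 : ∑ y ∈ A.filter (fun y => pos y < h), p ^ pos y + (cc pos h A * p ^ h + p ^ (h + 1) * c)
    = ∑ y ∈ A.filter (fun y => pos y < h), p ^ pos y + p ^ h * (cc pos h A + p * c) := by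
    ring
  rw [h4, Nat.add_mul_div_left _ _ hph, Nat.div_eq_of_lt h2, zero_add, Nat.add_mul_mod_self_left,
    Nat.mod_eq_of_lt h3]

/-- The larger of two numbers has the larger digit at the top position where they differ. -/
lemma exists_top_digit (hp : 2 ≤ p) {a b : ℕ} (hab : a < b) :
    ∃ h, a / p ^ h % p < b / p ^ h % p ∧ ∀ h', h < h' → a / p ^ h' % p = b / p ^ h' % p := by
  have hex : ∃ n, a / p ^ n = b / p ^ n := by
    have h1 : b < p ^ b := Nat.lt_pow_self (by omega)
    exact ⟨b, by rw [Nat.div_eq_of_lt h1, Nat.div_eq_of_lt (by omega)]⟩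
  have hs := Nat.find_spec hex
  have hm := fun m => Nat.find_min hex (m := m)
  set n := Nat.find hex
  obtain ⟨h, hh⟩ : ∃ h, n = h + 1 := by
    refine ⟨n - 1, ?_⟩
    have : n ≠ 0 := by
      intro h0
      rw [h0] at hs
      simp at hs
      omega
    omega
  refine ⟨h, ?_, fun h' hh' => ?_⟩
  · have h1 := hm h (by omega)
    have h2 : a / p ^ h ≤ b / p ^ h := Nat.div_le_div_right hab.le
    rw [hh, pow_succ, ← Nat.div_div_eq_div_mul, ← Nat.div_div_eq_div_mul] at hs
    have h3 := Nat.div_add_mod (a / p ^ h) p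
    have h4 := Nat.div_add_mod (b / p ^ h) p
    rw [hs] at h3
    omega
  · obtain ⟨e, rfl⟩ : ∃ e, h' = n + e := ⟨h' - n, by omega⟩
    rw [pow_add, ← Nat.div_div_eq_div_mul, ← Nat.div_div_eq_div_mul, hs]

lemma W_le_of_cc {A B : Finset ι} (h : ∀ n, cc pos n A ≤ cc pos n B) (i : ZMod f) :
    W p (fun y => ((pos y : ℕ) : ZMod f)) i A ≤ W p (fun y => ((pos y : ℕ) : ZMod f)) i B := by
  have key : ∀ C : Finset ι, C ⊆ A ∪ B → W p (fun y => ((pos y : ℕ) : ZMod f)) i C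
      = ∑ n ∈ (A ∪ B).image pos, cc pos n C * p ^ gap i ((n : ℕ) : ZMod f) := by
    intro C hC
    unfold W cc
    rw [← Finset.sum_fiberwise_of_maps_to (t := (A ∪ B).image pos) (g := pos)
      (fun y hy => Finset.mem_image_of_mem _ (hC hy))]
    refine Finset.sum_congr rfl fun n _ => ?_
    rw [Finset.sum_congr rfl (g := fun _ => p ^ gap i ((n : ℕ) : ZMod f)), Finset.sum_const,
      smul_eq_mul]
    intro y hy
    dsimp only
    rw [(Finset.mem_filter.mp hy).2]
  rw [key A Finset.subset_union_left, key B Finset.subset_union_right]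
  exact Finset.sum_le_sum fun n _ => Nat.mul_le_mul_right _ (h n)

lemma pow_modEq (hp : 2 ≤ p) (i : ZMod f) (n : ℕ) :
    p ^ i.val * p ^ gap i ((n : ℕ) : ZMod f) ≡ p ^ n [MOD p ^ f - 1] := by
  have h1 : p ^ f ≡ 1 [MOD p ^ f - 1] := by
    have : 1 ≤ p ^ f := Nat.one_le_pow _ _ (by omega)
    exact ((Nat.modEq_iff_dvd' this).mpr dvd_rfl).symm
  have h2 : ∀ a b : ℕ, a ≡ b [MOD f] → p ^ a ≡ p ^ b [MOD p ^ f - 1] := by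
    have h3 : ∀ a, p ^ a ≡ p ^ (a % f) [MOD p ^ f - 1] := by
      intro a
      conv_lhs => rw [← Nat.div_add_mod a f, pow_add, pow_mul]
      have := (h1.pow (a / f)).mul_right (p ^ (a % f))
      simpa using this
    intro a b hab
    have := (h3 a).trans ((by rw [hab] : p ^ (a % f) ≡ p ^ (b % f) [MOD p ^ f - 1]).trans
      (h3 b).symm)
    exact this
  rw [← pow_add]
  apply h2
  rw [← ZMod.natCast_eq_natCast_iff]
  unfold gap
  push_cast
  rw [ZMod.natCast_zmod_val, ZMod.natCast_zmod_val]
  ring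

lemma dvd_W_iff (hp : 2 ≤ p) (A : Finset ι) (i : ZMod f) :
    (p ^ f - 1) ∣ W p (fun y => ((pos y : ℕ) : ZMod f)) i A ↔ (p ^ f - 1) ∣ val p pos A := by
  have h1 : p ^ i.val * W p (fun y => ((pos y : ℕ) : ZMod f)) i A ≡ val p pos A
      [MOD p ^ f - 1] := by
    unfold W val
    rw [Finset.mul_sum]
    exact Nat.ModEq.sum fun y _ => pow_modEq hp i (pos y)
  have h2 : Nat.Coprime (p ^ f - 1) (p ^ i.val) := by
    apply Nat.Coprime.pow_right
    have h3 : 1 ≤ p ^ f := Nat.one_le_pow _ _ (by omega)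
    have h4 : Nat.Coprime (p ^ f - 1) (p ^ f) := by
      have := (Nat.coprime_self_add_right (m := p ^ f - 1) (n := 1)).mpr (by simp)
      rwa [Nat.sub_add_cancel h3] at this
    exact Nat.Coprime.coprime_dvd_right (dvd_pow_self p (NeZero.ne f)) h4
  rw [← h1.dvd_iff dvd_rfl]
  exact ⟨fun h => h.mul_left _, fun h => h2.dvd_of_dvd_mul_left h⟩

/-- The elements with labels at least `s`, with labels lowered by `s`, are optimally packed. -/
lemma IsOpt.drop (hp : 2 ≤ p) {S : Finset ι} {g : ι → ℕ} (hF : Fib p pos S) {d : ℕ}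
    (hg : IsOpt f p pos d S g) (s : ℕ) (hs : s ≤ d) :
    IsOpt f p pos (d - s) (S.filter (fun y => s ≤ g y)) (fun y => g y - s) := by
  induction s with
  | zero => simpa using hg
  | succ s ih =>
    have h1 := ih (by omega)
    rw [show d - s = (d - (s + 1)) + 1 by omega] at h1
    have h2 := h1.pred hp (rigid hp _) (hF.mono (Finset.filter_subset _ _))
    have e1 : (S.filter (fun y => s ≤ g y)).filter (fun y => 1 ≤ g y - s)
        = S.filter (fun y => s + 1 ≤ g y) := by
      rw [Finset.filter_filter]
      exact Finset.filter_congr fun y _ => by omega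
    have e2 : (fun y => g y - s - 1) = fun y => g y - (s + 1) := by
      funext y; omega
    rw [e1, e2] at h2
    exact h2

/-- The weight bound for the parts of a packing with labels above `s`. -/
lemma IsPack.drop_le_W (hp : 2 ≤ p) {ty : ι → ZMod f} {d : ℕ} {S : Finset ι} {g : ι → ℕ}
    (hg : IsPack p ty d S g) (s : ℕ) (i : ZMod f) :
    (d - s) * (p ^ f - 1) ≤ W p ty i (S.filter (fun y => s + 1 ≤ g y)) := by
  have h1 : IsPack p ty (d - s) (S.filter (fun y => s ≤ g y)) (fun y => g y - s) := by
    refine ⟨fun y hy => ?_, fun m hm hmd => ?_⟩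
    · have := hg.1 y (Finset.mem_filter.mp hy).1
      dsimp only; omega
    · have : part (S.filter (fun y => s ≤ g y)) (fun y => g y - s) m = part S g (m + s) := by
        ext y
        simp only [mem_part, Finset.mem_filter]
        constructor
        · rintro ⟨⟨h1, h2⟩, h3⟩; exact ⟨h1, by omega⟩
        · rintro ⟨h1, h2⟩; exact ⟨⟨h1, by omega⟩, by omega⟩
      rw [this]
      exact hg.2 _ (by omega) (by omega)
  have h2 := h1.le_W hp i
  rw [Finset.filter_filter] at h2
  refine h2.trans (W_mono fun y hy => ?_)
  rw [Finset.mem_filter] at hy ⊢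
  exact ⟨hy.1, by omega⟩

/-- If an optimal packing and another packing represent the same number by their elements with
labels at least `s`, the optimal one represents at most as much by its labels above `s`. -/
lemma opt_val_le (hp : 2 ≤ p) {d : ℕ} {S S' : Finset ι} {g g' : ι → ℕ} (hF : Fib p pos S)
    (hF' : Fib p pos S') (hg : IsOpt f p pos d S g)
    (hg' : IsPack p (fun y => ((pos y : ℕ) : ZMod f)) d S' g') {s : ℕ} (hs : s ≤ d)
    (heq : val p pos (S.filter (fun y => s ≤ g y)) = val p pos (S'.filter (fun y => s ≤ g' y))) :
    val p pos (S.filter (fun y => s + 1 ≤ g y)) ≤ val p pos (S'.filter (fun y => s + 1 ≤ g' y)) := by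
  by_contra hcon
  rw [not_le] at hcon
  obtain ⟨h, hlt, htop⟩ := exists_top_digit hp hcon
  have hFs : ∀ n, Fib p pos (S.filter (fun y => n ≤ g y)) := fun n =>
    hF.mono (Finset.filter_subset _ _)
  have hFs' : ∀ n, Fib p pos (S'.filter (fun y => n ≤ g' y)) := fun n =>
    hF'.mono (Finset.filter_subset _ _)
  rw [digit_val hp (hFs _), digit_val hp (hFs' _)] at hlt
  have htop' : ∀ n, h < n → cc pos n (S'.filter (fun y => s + 1 ≤ g' y))
      = cc pos n (S.filter (fun y => s + 1 ≤ g y)) := by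
    intro n hn
    rw [← digit_val hp (hFs _), ← digit_val hp (hFs' _)]
    exact htop n hn
  have hcs : ∀ n, cc pos n (S.filter (fun y => s ≤ g y))
      = cc pos n (S'.filter (fun y => s ≤ g' y)) := by
    intro n
    rw [← digit_val hp (hFs _), ← digit_val hp (hFs' _), heq]
  obtain ⟨x, hx⟩ : ((S.filter (fun y => s + 1 ≤ g y)).filter (fun y => pos y = h)).Nonempty := by
    rw [← Finset.card_pos]
    unfold cc at hlt
    omega
  rw [Finset.mem_filter, Finset.mem_filter] at hx
  obtain ⟨⟨hxS, hxg⟩, hxh⟩ := hx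
  obtain ⟨i, hi⟩ := rigid hp (d - s) _ _ (hFs s) (hg.drop hp hF s hs) x
    (Finset.mem_filter.mpr ⟨hxS, by omega⟩) (by omega)
  refine absurd (hg'.drop_le_W hp s i) (not_le.mpr (lt_of_le_of_lt (W_le_of_cc (fun n => ?_) i) hi))
  rw [hxh]
  rcases lt_trichotomy n h with hn | hn | hn
  · calc cc pos n (S'.filter (fun y => s + 1 ≤ g' y))
        ≤ cc pos n (S'.filter (fun y => s ≤ g' y)) := by
          refine Finset.card_le_card fun y hy => ?_
          simp only [Finset.mem_filter] at hy ⊢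
          exact ⟨⟨hy.1.1, by omega⟩, hy.2⟩
      _ = cc pos n (S.filter (fun y => s ≤ g y)) := (hcs n).symm
      _ ≤ _ := by
          refine Finset.card_le_card fun y hy => ?_
          simp only [Om, Finset.mem_filter, Finset.mem_erase] at hy ⊢
          refine ⟨⟨?_, ⟨hy.1, Or.inl (by omega)⟩⟩, hy.2⟩
          rintro rfl
          omega
  · subst hn
    have h1 : cc pos n (S.filter (fun y => s + 1 ≤ g y)) - 1 ≤ cc pos n
        ((Om pos (S.filter (fun y => s ≤ g y)) (fun y => g y - s) n).erase x) := by
      unfold cc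
      rw [← Finset.card_erase_of_mem (a := x)
        (Finset.mem_filter.mpr ⟨Finset.mem_filter.mpr ⟨hxS, hxg⟩, hxh⟩)]
      refine Finset.card_le_card fun y hy => ?_
      simp only [Om, Finset.mem_filter, Finset.mem_erase] at hy ⊢
      exact ⟨⟨hy.1, ⟨hy.2.1.1, by omega⟩, Or.inr (by omega)⟩, hy.2.2⟩
    omega
  · rw [htop' n hn]
    refine Finset.card_le_card fun y hy => ?_
    simp only [Om, Finset.mem_filter, Finset.mem_erase] at hy ⊢
    refine ⟨⟨?_, ⟨hy.1.1, by omega⟩, Or.inr (by omega)⟩, hy.2⟩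
    rintro rfl
    omega

end Digits

/-! ### Packings and the set `U_d(k)` -/

lemma sum_digits_mul (p n B : ℕ) :
    ∑ h ∈ Finset.range B, n / p ^ h % p * p ^ h = n % p ^ B := by
  induction B with
  | zero => simp [Nat.mod_one]
  | succ B ih => rw [Finset.sum_range_succ, ih, Nat.mod_pow_succ, mul_comm]

/-- The tuple of numbers represented by the parts of a labelling. -/
noncomputable def tup {ι : Type} (p : ℕ) (pos : ι → ℕ) (d : ℕ) (S : Finset ι) (g : ι → ℕ) :
    Fin (d + 1) → ℕ := fun i => val p pos (part S g i)

section Tuples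
variable {ι : Type} {f : ℕ} [NeZero f] {p : ℕ} {pos : ι → ℕ}

/-- Sums over the labels are sums over the parts. -/
lemma sum_parts {d : ℕ} {S : Finset ι} {g : ι → ℕ} (hg : ∀ y ∈ S, g y ≤ d) (w : ι → ℕ) :
    ∑ i : Fin (d + 1), ∑ y ∈ part S g i, w y = ∑ y ∈ S, w y := by
  rw [Fin.sum_univ_eq_sum_range (fun i => ∑ y ∈ part S g i, w y)]
  unfold part
  exact Finset.sum_fiberwise_of_maps_to (fun y hy => Finset.mem_range.mpr
    (Nat.lt_succ_of_le (hg y hy))) _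

lemma tup_mem (hp : 2 ≤ p) {d k : ℕ} {S : Finset ι} {g : ι → ℕ} (hF : Fib p pos S)
    (hg : IsPack p (fun y => ((pos y : ℕ) : ZMod f)) d S g) (hk : val p pos S = k) :
    tup p pos d S g ∈ Uset p (p ^ f) d k := by
  have hFp : ∀ m, Fib p pos (part S g m) := fun m => hF.mono (Finset.filter_subset _ _)
  refine ⟨⟨?_, fun j => ?_⟩, fun i hi => ?_⟩
  · rw [← hk]; exact sum_parts hg.1 _
  · rw [Nat.getD_digits _ _ hp, ← hk, digit_val hp hF]
    have h1 : ∀ i : Fin (d + 1), (Nat.digits p (tup p pos d S g i)).getD j 0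
        = ∑ y ∈ part S g i, if pos y = j then 1 else 0 := by
      intro i
      rw [Nat.getD_digits _ _ hp]
      unfold tup
      rw [digit_val hp (hFp _), cc, Finset.card_filter]
    rw [Finset.sum_congr rfl fun i _ => h1 i, sum_parts hg.1, cc, Finset.card_filter]
  · have h1 := hg.2 i hi (by omega)
    refine ⟨?_, (dvd_W_iff hp _ 0).mp (h1.2 0)⟩
    obtain ⟨y, hy⟩ := h1.1
    exact Finset.sum_pos (fun _ _ => pow_pos (by omega) _) ⟨y, hy⟩

lemma wt_tup {d : ℕ} {S : Finset ι} {g : ι → ℕ} (hg : ∀ y ∈ S, g y ≤ d) :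
    wt (tup p pos d S g) + cost p pos S g = d * val p pos S := by
  have h1 : cost p pos S g = ∑ i : Fin (d + 1), (i : ℕ) * tup p pos d S g i := by
    unfold cost
    rw [← sum_parts hg]
    refine Finset.sum_congr rfl fun i _ => ?_
    unfold tup val
    rw [Finset.mul_sum]
    refine Finset.sum_congr rfl fun y hy => ?_
    rw [(mem_part.mp hy).2]
  have h2 : val p pos S = ∑ i : Fin (d + 1), tup p pos d S g i := (sum_parts hg _).symm
  rw [h1, h2, wt, ← Finset.sum_add_distrib, Finset.mul_sum]
  refine Finset.sum_congr rfl fun i _ => ?_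
  rw [← add_mul]
  congr 1
  omega

lemma val_drop {d : ℕ} {S : Finset ι} {g : ι → ℕ} (hg : ∀ y ∈ S, g y ≤ d) (s : ℕ) :
    val p pos (S.filter (fun y => s ≤ g y))
      = ∑ i : Fin (d + 1), if s ≤ (i : ℕ) then tup p pos d S g i else 0 := by
  unfold val
  rw [Finset.sum_filter, ← sum_parts hg]
  refine Finset.sum_congr rfl fun i _ => ?_
  split_ifs with h
  · refine Finset.sum_congr rfl fun y hy => ?_
    rw [(mem_part.mp hy).2, if_pos h]
  · refine Finset.sum_eq_zero fun y hy => ?_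
    rw [(mem_part.mp hy).2, if_neg h]

end Tuples

/-- Every element of `U_d(k)` comes from a packing: the units are the triples
`(h, i, c)` with `c` less than the digit of `m_i` at position `h`. -/
lemma exists_pack {f p : ℕ} [NeZero f] (hp : 2 ≤ p) {d k : ℕ} {m : Fin (d + 1) → ℕ}
    (hm : m ∈ Uset p (p ^ f) d k) :
    ∃ (S : Finset (ℕ × Fin (d + 1) × ℕ)) (g : ℕ × Fin (d + 1) × ℕ → ℕ),
      Fib p Prod.fst S ∧ IsPack p (fun y => ((Prod.fst y : ℕ) : ZMod f)) d S g ∧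
      val p Prod.fst S = k ∧ tup p Prod.fst d S g = m := by
  obtain ⟨⟨hsum, hdig⟩, hU⟩ := hm
  have hdig' : ∀ j, ∑ i, m i / p ^ j % p = k / p ^ j % p := by
    intro j
    have := hdig j
    simpa only [Nat.getD_digits _ _ hp] using this
  have hmk : ∀ i, m i < p ^ k := fun i => by
    have h1 : m i ≤ k := by
      rw [← hsum]; exact Finset.single_le_sum (fun _ _ => Nat.zero_le _) (Finset.mem_univ i)
    exact lt_of_le_of_lt h1 (Nat.lt_pow_self (by omega))
  set S : Finset (ℕ × Fin (d + 1) × ℕ) :=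
    (Finset.range k ×ˢ (Finset.univ ×ˢ Finset.range p)).filter
      (fun y => y.2.2 < m y.2.1 / p ^ y.1 % p) with hS
  have hSmem : ∀ h i c, (h, i, c) ∈ S ↔ h < k ∧ c < m i / p ^ h % p := by
    intro h i c
    simp only [hS, Finset.mem_filter, Finset.mem_product, Finset.mem_range, Finset.mem_univ,
      true_and]
    constructor
    · rintro ⟨⟨h1, h2⟩, h3⟩; exact ⟨h1, h3⟩
    · rintro ⟨h1, h3⟩; exact ⟨⟨h1, h3.trans (Nat.mod_lt _ (by omega))⟩, h3⟩
  have hSsum : ∀ w : ℕ × Fin (d + 1) × ℕ → ℕ, ∑ y ∈ S, w y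
      = ∑ h ∈ Finset.range k, ∑ i, ∑ c ∈ Finset.range (m i / p ^ h % p), w (h, i, c) := by
    intro w
    rw [hS, Finset.sum_filter, Finset.sum_product]
    refine Finset.sum_congr rfl fun h _ => ?_
    rw [Finset.sum_product]
    refine Finset.sum_congr rfl fun i _ => ?_
    rw [← Finset.sum_filter]
    refine Finset.sum_congr ?_ fun _ _ => rfl
    ext c
    simp only [Finset.mem_filter, Finset.mem_range]
    exact ⟨fun h => h.2, fun h3 => ⟨h3.trans (Nat.mod_lt _ (by omega)), h3⟩⟩
  have hF : Fib p Prod.fst S := by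
    intro h
    have h1 : (S.filter (fun y => y.1 = h)).card ≤ k / p ^ h % p := by
      rw [Finset.card_filter, hSsum, ← hdig' h]
      by_cases hh : h ∈ Finset.range k
      · rw [Finset.sum_eq_single_of_mem h hh]
        · simp
        · intro b _ hb; simp [hb]
      · rw [Finset.sum_eq_zero]
        · exact Nat.zero_le _
        · intro b hb
          have : b ≠ h := fun h' => hh (h' ▸ hb)
          simp [this]
    have h2 := Nat.mod_lt (k / p ^ h) (show p > 0 by omega)
    refine h1.trans (by omega)
  have htup : tup p Prod.fst d S (fun y => (y.2.1 : ℕ)) = m := by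
    funext i
    unfold tup val part
    rw [Finset.sum_filter, hSsum]
    have h1 : ∀ h ∈ Finset.range k, (∑ j : Fin (d + 1), ∑ c ∈ Finset.range (m j / p ^ h % p),
        if ((j : ℕ) = (i : ℕ)) then p ^ h else 0) = m i / p ^ h % p * p ^ h := by
      intro h _
      rw [Finset.sum_eq_single_of_mem i (Finset.mem_univ _)]
      · simp
      · intro j _ hj
        have : (j : ℕ) ≠ i := fun h' => hj (Fin.ext h')
        simp [this]
    rw [Finset.sum_congr rfl h1, sum_digits_mul, Nat.mod_eq_of_lt (hmk i)]
  have hgd : ∀ y ∈ S, (y.2.1 : ℕ) ≤ d := fun y _ => by omega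
  refine ⟨S, fun y => (y.2.1 : ℕ), hF, ⟨hgd, fun n hn hnd => ?_⟩, ?_, htup⟩
  · have h1 := hU ⟨n, by omega⟩ hn
    have h2 : val p Prod.fst (part S (fun y => (y.2.1 : ℕ)) n) = m ⟨n, by omega⟩ := by
      rw [← htup]; rfl
    refine ⟨?_, fun i => ?_⟩
    · by_contra hcon
      rw [Finset.not_nonempty_iff_eq_empty] at hcon
      rw [hcon] at h2
      have h3 := h1.1
      rw [← h2] at h3
      simp [val] at h3
    · rw [dvd_W_iff hp, h2]; exact h1.2
  · rw [← hsum, ← htup]; exact (sum_parts hgd _).symm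

/-- An element of maximal weight which is lexicographically at most `M` equals `M`: at the first
index where they differ, `opt_val_le` is violated. -/
lemma eq_of_wt_max {f p : ℕ} [NeZero f] (hp : 2 ≤ p) {d k : ℕ} {m M : Fin (d + 1) → ℕ}
    (hm : m ∈ Uset p (p ^ f) d k) (hM : M ∈ Uset p (p ^ f) d k)
    (hwt : ∀ n ∈ Uset p (p ^ f) d k, wt n ≤ wt m) (hlex : toLex m ≤ toLex M) : m = M := by
  by_contra hne
  have hlt : toLex m < toLex M := lt_of_le_of_ne hlex fun h => hne (toLex.injective h)
  obtain ⟨s, hs1, hs2⟩ := hlt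
  obtain ⟨S, g, hF, hg, hk, htup⟩ := exists_pack hp hm
  obtain ⟨S', g', hF', hg', hk', htup'⟩ := exists_pack hp hM
  have hopt : IsOpt f p Prod.fst d S g := by
    refine ⟨hg, fun o ho => ?_⟩
    have h1 := hwt _ (tup_mem hp hF ho hk)
    have h2 := wt_tup (p := p) (pos := Prod.fst) ho.1
    have h3 := wt_tup (p := p) (pos := Prod.fst) hg.1
    rw [htup] at h3
    omega
  have hsum : ∑ i, m i = ∑ i, M i := hm.1.1.trans hM.1.1.symm
  have hs1' : ∀ j, j < s → m j = M j := fun j hj => hs1 j hj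
  have hs2' : m s < M s := hs2
  have e1 : ∀ n : Fin (d + 1) → ℕ, ∑ i, n i
      = (∑ i : Fin (d + 1), if i < s then n i else 0)
        + ∑ i : Fin (d + 1), if (s : ℕ) ≤ i then n i else 0 := by
    intro n
    rw [← Finset.sum_add_distrib]
    refine Finset.sum_congr rfl fun i _ => ?_
    simp only [Fin.lt_def]
    split_ifs <;> omega
  have e2 : ∀ n : Fin (d + 1) → ℕ, (∑ i : Fin (d + 1), if (s : ℕ) ≤ i then n i else 0)
      = n s + ∑ i : Fin (d + 1), if (s : ℕ) + 1 ≤ i then n i else 0 := by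
    intro n
    have : n s = ∑ i : Fin (d + 1), if i = s then n i else 0 := by simp
    rw [this, ← Finset.sum_add_distrib]
    refine Finset.sum_congr rfl fun i _ => ?_
    simp only [Fin.ext_iff]
    split_ifs <;> omega
  have e3 : (∑ i : Fin (d + 1), if i < s then m i else 0)
      = ∑ i : Fin (d + 1), if i < s then M i else 0 := by
    refine Finset.sum_congr rfl fun i _ => ?_
    split_ifs with h
    · exact hs1' i h
    · rfl
  have hle := opt_val_le hp hF hF' hopt hg' (s := s) (by omega) (by
    rw [val_drop hg.1, val_drop hg'.1, htup, htup']
    have := e1 m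
    have := e1 M
    omega)
  rw [val_drop hg.1, val_drop hg'.1, htup, htup'] at hle
  have := e1 m
  have := e1 M
  have := e2 m
  have := e2 M
  omega

lemma Uset_finite (p q d k : ℕ) : (Uset p q d k).Finite := by
  refine Set.Finite.subset (Set.Finite.pi' fun _ : Fin (d + 1) => Set.finite_Iic k) fun m hm i => ?_
  rw [Set.mem_Iic, ← hm.1.1]
  exact Finset.single_le_sum (fun _ _ => Nat.zero_le _) (Finset.mem_univ i)

theorem wt_lt_of_greedy {f p : ℕ} [NeZero f] (hp : 2 ≤ p) {d k : ℕ} {M : Fin (d + 1) → ℕ}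
    (hM : M ∈ Uset p (p ^ f) d k) (hmax : ∀ m ∈ Uset p (p ^ f) d k, toLex m ≤ toLex M) :
    ∀ m ∈ Uset p (p ^ f) d k, m ≠ M → wt m < wt M := by
  obtain ⟨m0, hm0, hmax0⟩ := Set.exists_max_image _ wt (Uset_finite p (p ^ f) d k) ⟨M, hM⟩
  have h0 := eq_of_wt_max hp hm0 hM hmax0 (hmax _ hm0)
  subst h0
  intro m hm hne
  refine lt_of_le_of_ne (hmax0 m hm) fun heq => hne ?_
  exact eq_of_wt_max hp hm hM (fun n hn => heq ▸ hmax0 n hn) (hmax _ hm)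

/-! ### Multinomial coefficients and carrying -/

section Multinomial
variable {p : ℕ}

lemma digitSum_rec (hp : 2 ≤ p) (n : ℕ) :
    (Nat.digits p n).sum = n % p + (Nat.digits p (n / p)).sum := by
  rcases Nat.eq_zero_or_pos n with rfl | hn
  · simp
  · rw [Nat.digits_def' (by omega) hn, List.sum_cons]

lemma digitSum_eq_sum (hp : 2 ≤ p) (B n : ℕ) (hn : n < p ^ B) :
    (Nat.digits p n).sum = ∑ j ∈ Finset.range B, n / p ^ j % p := by
  induction B generalizing n with
  | zero =>
    obtain rfl : n = 0 := by simpa using hn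
    simp
  | succ B ih =>
    rw [digitSum_rec hp, ih (n / p) (Nat.div_lt_of_lt_mul (by rwa [← pow_succ'])),
      Finset.sum_range_succ', add_comm]
    simp [pow_succ', Nat.div_div_eq_div_mul]

/-- Kummer's theorem for multinomial coefficients. -/
lemma multinomial_val [hp : Fact p.Prime] {n : ℕ} (m : Fin n → ℕ) :
    (p - 1) * padicValNat p (Nat.multinomial Finset.univ m)
      + (Nat.digits p (∑ i, m i)).sum = ∑ i, (Nat.digits p (m i)).sum := by
  have h0 : ∀ a, (p - 1) * padicValNat p a.factorial + (Nat.digits p a).sum = a := by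
    intro a
    rw [sub_one_mul_padicValNat_factorial]
    exact Nat.sub_add_cancel (Nat.digit_sum_le p a)
  have h1 : padicValNat p (∏ i, (m i).factorial) = ∑ i, padicValNat p (m i).factorial := by
    simp only [← Nat.factorization_def _ hp.out]
    rw [Nat.factorization_prod fun i _ => (Nat.factorial_ne_zero _), Finset.sum_apply']
  have h2 := congrArg (padicValNat p) (Nat.multinomial_spec (Finset.univ) m)
  have h3 : Nat.multinomial Finset.univ m ≠ 0 := (Nat.multinomial_pos _ _).ne'
  rw [padicValNat.mul (Finset.prod_ne_zero_iff.mpr fun i _ => Nat.factorial_ne_zero _) h3, h1] at h2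
  have h4 := h0 (∑ i, m i)
  rw [← h2, mul_add, Finset.mul_sum] at h4
  have h5 : ∑ i, m i = ∑ i, (p - 1) * padicValNat p (m i).factorial
      + ∑ i, (Nat.digits p (m i)).sum := by
    rw [← Finset.sum_add_distrib]
    exact Finset.sum_congr rfl fun i _ => (h0 (m i)).symm
  omega

lemma digitSum_sum_le [hp : Fact p.Prime] {n : ℕ} (m : Fin n → ℕ) :
    (Nat.digits p (∑ i, m i)).sum ≤ ∑ i, (Nat.digits p (m i)).sum := by
  have := multinomial_val (p := p) m
  omega

lemma digitSum_add_le [hp : Fact p.Prime] (a b : ℕ) :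
    (Nat.digits p (a + b)).sum ≤ (Nat.digits p a).sum + (Nat.digits p b).sum := by
  simpa using digitSum_sum_le (p := p) ![a, b]

/-- If digit sums add up, there is no carry out of the lowest digit, and the digit sums of the
remaining digits add up. -/
lemma digitSum_step [hp : Fact p.Prime] {n : ℕ} (m : Fin n → ℕ)
    (h : (Nat.digits p (∑ i, m i)).sum = ∑ i, (Nat.digits p (m i)).sum) :
    ∑ i, m i % p = (∑ i, m i) % p ∧ (∑ i, m i) / p = ∑ i, m i / p ∧
      (Nat.digits p (∑ i, m i / p)).sum = ∑ i, (Nat.digits p (m i / p)).sum := by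
  have hp2 := hp.out.two_le
  -- `c` is the carry out of the lowest digit
  obtain ⟨c, hc⟩ : ∃ c, (∑ i, m i % p) / p = c := ⟨_, rfl⟩
  have h1 : ∑ i, m i = ∑ i, m i % p + p * ∑ i, m i / p := by
    rw [Finset.mul_sum, ← Finset.sum_add_distrib]
    exact Finset.sum_congr rfl fun i _ => (Nat.mod_add_div _ _).symm
  have h2 : (∑ i, m i) / p = c + ∑ i, m i / p := by
    rw [h1, Nat.add_mul_div_left _ _ (by omega), hc]
  have h3 : (∑ i, m i) % p = (∑ i, m i % p) % p := by
    rw [h1, Nat.add_mul_mod_self_left]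
  have h4 := digitSum_add_le (p := p) c (∑ i, m i / p)
  have h5 := digitSum_sum_le (p := p) (fun i => m i / p)
  have h6 := Nat.digit_sum_le p c
  have h7 : ∑ i, (Nat.digits p (m i)).sum
      = ∑ i, m i % p + ∑ i, (Nat.digits p (m i / p)).sum := by
    rw [← Finset.sum_add_distrib]
    exact Finset.sum_congr rfl fun i _ => digitSum_rec hp2 _
  have h8 := Nat.div_add_mod (∑ i, m i % p) p
  rw [hc] at h8
  have h9 := digitSum_rec hp2 (∑ i, m i)
  rw [h2, h3] at h9
  have h10 : 2 * c ≤ p * c := Nat.mul_le_mul_right _ hp2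
  have hc0 : c = 0 := by omega
  subst hc0
  rw [zero_add] at h2 h9
  refine ⟨?_, h2, ?_⟩ <;> omega

/-- If digit sums add up then no carrying takes place. -/
lemma digits_of_digitSum [hp : Fact p.Prime] {n : ℕ} (j : ℕ) (m : Fin n → ℕ)
    (h : (Nat.digits p (∑ i, m i)).sum = ∑ i, (Nat.digits p (m i)).sum) :
    ∑ i, m i / p ^ j % p = (∑ i, m i) / p ^ j % p := by
  obtain ⟨h1, h2, h3⟩ := digitSum_step m h
  induction j generalizing m with
  | zero => simpa using h1
  | succ j ih =>
    simp only [pow_succ', ← Nat.div_div_eq_div_mul]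
    obtain ⟨h4, h5, h6⟩ := digitSum_step (fun i => m i / p) h3
    rw [h2]
    exact ih _ h3 h4 h5 h6

lemma noCarry_iff [hp : Fact p.Prime] {n k : ℕ} (m : Fin n → ℕ) (hk : ∑ i, m i = k) :
    NoCarry p m k ↔ ¬ p ∣ Nat.multinomial Finset.univ m := by
  have hp2 := hp.out.two_le
  have h1 := multinomial_val (p := p) m
  have h3 : Nat.multinomial Finset.univ m ≠ 0 := (Nat.multinomial_pos _ _).ne'
  constructor
  · rintro ⟨-, h2⟩ hdvd
    have hlt : ∀ i, m i < p ^ k := fun i => by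
      have : m i ≤ k := by
        rw [← hk]; exact Finset.single_le_sum (fun _ _ => Nat.zero_le _) (Finset.mem_univ i)
      exact lt_of_le_of_lt this (Nat.lt_pow_self (by omega))
    have h4 : (Nat.digits p k).sum = ∑ i, (Nat.digits p (m i)).sum := by
      rw [digitSum_eq_sum hp2 k k (Nat.lt_pow_self (by omega)),
        Finset.sum_congr rfl fun i _ => digitSum_eq_sum hp2 k (m i) (hlt i), Finset.sum_comm]
      refine Finset.sum_congr rfl fun j _ => ?_
      have := h2 j
      simp only [Nat.getD_digits _ _ hp2] at this
      exact this.symm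
    have h5 := one_le_padicValNat_of_dvd h3 hdvd
    rw [hk, h4] at h1
    have h6 : 0 < (p - 1) * padicValNat p (Nat.multinomial Finset.univ m) :=
      Nat.mul_pos (by omega) h5
    omega
  · intro hdvd
    rw [padicValNat.eq_zero_of_not_dvd hdvd, mul_zero, zero_add] at h1
    refine ⟨hk, fun j => ?_⟩
    simp only [Nat.getD_digits _ _ hp2]
    rw [← hk]
    exact digits_of_digitSum j m h1

end Multinomial

/-! ### The degree of the power sum -/

section Degree
variable {F : Type} [Field F] [Fintype F]

lemma sum_pow_field (n : ℕ) :
    ∑ x : F, x ^ n = if 0 < n ∧ (Fintype.card F - 1) ∣ n then -1 else 0 := by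
  by_cases hn : n = 0
  · simp [hn]
  · have h1 : ∑ x : F, x ^ n = ∑ x : Fˣ, (x ^ n : F) := by
      let φ : Fˣ ↪ F := ⟨fun x => x, Units.val_injective⟩
      have h2 : Finset.univ.map φ = Finset.univ \ {0} := by
        ext x
        simpa only [Finset.mem_map, Finset.mem_univ, Function.Embedding.coeFn_mk, true_and,
          Finset.mem_sdiff, Finset.mem_singleton, φ] using! isUnit_iff_ne_zero
      calc ∑ x : F, x ^ n = ∑ x ∈ Finset.univ \ {(0 : F)}, x ^ n := by
            rw [← Finset.sum_sdiff ({0} : Finset F).subset_univ, Finset.sum_singleton,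
              zero_pow hn, add_zero]
        _ = ∑ x : Fˣ, (x ^ n : F) := by simp [φ, ← h2, Finset.univ.sum_map φ]
    rw [h1, FiniteField.sum_pow_units]
    simp [Nat.pos_of_ne_zero hn]

/-- The monic polynomial with its coefficients listed from the top degree downwards. -/
lemma monicPoly_rev (d : ℕ) (c : Fin d → F) :
    monicPoly F d (c ∘ Fin.rev)
      = ∑ i : Fin (d + 1), C ((Fin.cons 1 c : Fin (d + 1) → F) i) * X ^ (d - (i : ℕ)) := by
  rw [Fin.sum_univ_succ, monicPoly]
  congr 1
  · simp
  · refine Fintype.sum_equiv Fin.revPerm _ _ fun i => ?_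
    simp only [Function.comp, Fin.revPerm_apply, Fin.cons_succ, Fin.val_succ, Fin.val_rev]
    congr 2
    omega

/-- The coefficient attached to an exponent tuple in the expansion of `S_d(-k)`. -/
noncomputable def coef (F : Type) [Field F] [Fintype F] {d : ℕ} (m : Fin (d + 1) → ℕ) : F :=
  (Nat.multinomial Finset.univ m : F) * ∏ i : Fin d, ∑ x : F, x ^ m i.succ

lemma powerSum_eq (d k : ℕ) :
    powerSum F d k = ∑ m ∈ Finset.piAntidiag (Finset.univ : Finset (Fin (d + 1))) k,
      C (coef F m) * X ^ wt m := by
  have h1 : powerSum F d k = ∑ c : Fin d → F, monicPoly F d (c ∘ Fin.rev) ^ k := by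
    unfold powerSum
    exact (Fintype.sum_equiv (Equiv.arrowCongr Fin.revPerm (Equiv.refl F)) _ _
      fun c => rfl).symm
  rw [h1]
  simp only [monicPoly_rev, Finset.sum_pow_eq_sum_piAntidiag]
  rw [Finset.sum_comm]
  refine Finset.sum_congr rfl fun m _ => ?_
  rw [← Finset.mul_sum, coef, map_mul, mul_assoc]
  congr 1
  rw [Finset.prod_univ_sum, Fintype.piFinset_univ, map_sum, Finset.sum_mul]
  refine Finset.sum_congr rfl fun c _ => ?_
  simp only [mul_pow, Finset.prod_mul_distrib]
  congr 1
  · rw [Fin.prod_univ_succ]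
    simp
  · simp only [← pow_mul]
    rw [Finset.prod_pow_eq_pow_sum, wt]

lemma coef_ne_zero_iff {p f : ℕ} [hp : Fact p.Prime] (hF : Fintype.card F = p ^ f) {d k : ℕ}
    (m : Fin (d + 1) → ℕ) (hk : ∑ i, m i = k) : coef F m ≠ 0 ↔ m ∈ Uset p (p ^ f) d k := by
  have hchar : CharP F p := charP_of_card_eq_prime_pow hF
  rw [coef, mul_ne_zero_iff, Ne, CharP.cast_eq_zero_iff F p, ← noCarry_iff m hk,
    Finset.prod_ne_zero_iff]
  refine and_congr_right fun _ => ?_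
  simp only [sum_pow_field, hF]
  constructor
  · intro h i hi
    obtain ⟨j, rfl⟩ := Fin.exists_succ_eq.mpr (show i ≠ 0 by rintro rfl; simp at hi)
    by_contra hcon
    exact h j (Finset.mem_univ _) (if_neg hcon)
  · intro h j _
    rw [if_pos (h j.succ (by simp))]
    simp

lemma natDegree_powerSum {p f : ℕ} [hp : Fact p.Prime] (hF : Fintype.card F = p ^ f) {d k : ℕ}
    {M : Fin (d + 1) → ℕ} (hM : M ∈ Uset p (p ^ f) d k)
    (hwt : ∀ m ∈ Uset p (p ^ f) d k, m ≠ M → wt m < wt M) :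
    (powerSum F d k).natDegree = wt M := by
  rw [powerSum_eq]
  have hU : ∀ m ∈ Finset.piAntidiag (Finset.univ : Finset (Fin (d + 1))) k, coef F m ≠ 0 →
      m ∈ Uset p (p ^ f) d k := fun m hm h =>
    (coef_ne_zero_iff hF m (Finset.mem_piAntidiag.mp hm).1).mp h
  refine natDegree_eq_of_le_of_coeff_ne_zero ?_ ?_
  · refine natDegree_sum_le_of_forall_le _ _ fun m hm => ?_
    by_cases h : coef F m = 0
    · simp [h]
    · refine (natDegree_C_mul_X_pow_le _ _).trans ?_
      by_cases hmM : m = M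
      · rw [hmM]
      · exact (hwt m (hU m hm h) hmM).le
  · rw [finsetSum_coeff, Finset.sum_eq_single M]
    · rw [coeff_C_mul_X_pow, if_pos rfl]
      exact (coef_ne_zero_iff hF M hM.1.1).mpr hM
    · intro m hm hmM
      rw [coeff_C_mul_X_pow]
      split_ifs with h
      · by_contra h'
        exact absurd h (hwt m (hU m hm h') hmM).ne'
      · rfl
    · intro h
      exact absurd (Finset.mem_piAntidiag.mpr ⟨hM.1.1, fun i _ => Finset.mem_univ i⟩) h

end Degree

theorem stmt2 (p f q : ℕ) (hp : p.Prime) (hf : 0 < f) (hq : q = p ^ f)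
    (F : Type) [Field F] [Fintype F] (hF : Fintype.card F = q)
    (d k : ℕ) (hk : 0 < k)
    (M : Fin (d + 1) → ℕ) (hM : M ∈ Uset p q d k)
    (hmax : ∀ m ∈ Uset p q d k, toLex m ≤ toLex M) :
    (∀ m ∈ Uset p q d k, m ≠ M → wt m < wt M) ∧
      (powerSum F d k).natDegree = wt M := by
  subst hq
  have : NeZero f := ⟨hf.ne'⟩
  have : Fact p.Prime := ⟨hp⟩
  have h1 := wt_lt_of_greedy hp.two_le hM hmax
  exact ⟨h1, natDegree_powerSum hF hM h1⟩
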